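/- arXiv:1305.2206 — 5 statements merged into one kernel-verified Lean document; each statement's English description precedes it below -/
import Mathlib

section
/- For all natural numbers a and c, the number of paths P ∈ P(T,B) with t(P) = a and b(P) = c equals the number of paths P ∈ P(T,B) with t(P) = c and b(P) = a. (The joint distribution of the statistics 'number of east steps shared with T' and 'number of east steps shared with B' over P(T,B) is symmetric.) -/
/-- A path `P` lies in `P(T,B)`: it is weakly increasing (monotone) and lies
weakly between the boundaries `B` and `T`. -/
def InP {x y : ℕ} (T B P : Fin x → Fin (y+1)) : Prop :=
  Monotone P ∧ ∀ j, B j ≤ P j ∧ P j ≤ T j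

/-- The number of east steps of `P` shared with the path `Q` (contacts with `Q`). -/
noncomputable def ccount {x y : ℕ} (Q P : Fin x → Fin (y+1)) : ℕ :=
  Nat.card {j : Fin x // P j = Q j}

def stepG {R : Type*} [CommRing R] (u v : R) (T B : ℕ) (G : ℕ → R) (h : ℕ) : R :=
  ∑ k ∈ Finset.range (h+1), if B ≤ k ∧ k ≤ T then
    (if k = T then u else 1) * (if k = B then v else 1) * G k else 0

theorem stepG_succ {R : Type*} [CommRing R] (u v : R) (T B : ℕ) (G : ℕ → R) (h : ℕ) :
    stepG u v T B G (h+1) = stepG u v T B G h + if B ≤ h+1 ∧ h+1 ≤ T then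
    (if h+1 = T then u else 1) * (if h+1 = B then v else 1) * G (h+1) else 0 := by
  unfold stepG
  rw [Finset.sum_range_succ]

theorem stepG_ge {R : Type*} [CommRing R] (u v : R) (T B : ℕ) (G : ℕ → R) (h : ℕ) (hh : T ≤ h) :
    stepG u v T B G h = stepG u v T B G T := by
  induction h, hh using Nat.le_induction with
  | base => rfl
  | succ m hm ih =>
    rw [stepG_succ, ih, if_neg (by omega), add_zero]

theorem stepG_lt {R : Type*} [CommRing R] (u v : R) (T B : ℕ) (G : ℕ → R) (h : ℕ) (hh : h < B) :
    stepG u v T B G h = 0 := by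
  unfold stepG
  apply Finset.sum_eq_zero
  intro k hk
  rw [Finset.mem_range] at hk
  rw [if_neg (by omega)]

theorem stepG_B {R : Type*} [CommRing R] (u v : R) (T B : ℕ) (G : ℕ → R) (hBT : B ≤ T) :
    stepG u v T B G B = (if B = T then u else 1) * v * G B := by
  have := stepG_lt u v T B G
  unfold stepG at this ⊢
  rw [Finset.sum_range_succ, if_pos ⟨le_refl _, hBT⟩, if_pos rfl]
  rcases B with _ | B
  · simp
  · rw [this B (by omega)]; simp

theorem stepG_mid {R : Type*} [CommRing R] (u v : R) (M B : ℕ) (G : ℕ → R) (h m : ℕ)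
    (hB : B ≤ h) (hm : h ≤ m) (hM : m ≤ M) :
    stepG u v (M+1) B G m = stepG u v (M+1) B G h + ∑ k ∈ Finset.Ioc h m, G k := by
  induction m, hm using Nat.le_induction with
  | base => simp
  | succ m hm ih =>
    rw [stepG_succ, ih (by omega), if_pos (by omega), if_neg (by omega), if_neg (by omega),
      Finset.sum_Ioc_succ_top (by omega)]
    ring

theorem stepG_top {R : Type*} [CommRing R] (u v : R) (M B : ℕ) (G : ℕ → R) (h : ℕ)
    (hB : B ≤ h) (hM : h ≤ M) :
    stepG u v (M+1) B G (M+1) =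
      stepG u v (M+1) B G h + ∑ k ∈ Finset.Ioc h M, G k + u * G (M+1) := by
  rw [stepG_succ, stepG_mid u v M B G h M hB hM le_rfl, if_pos (by omega), if_pos rfl,
    if_neg (by omega)]
  ring

structure PathInv {R : Type*} [CommRing R] (A : Subring R) (u v : R) (N T B : ℕ) (G : ℕ → R) :
    Prop where
  hG : ∀ h, T ≤ h → G h = G T
  hF : G T ∈ A
  hS : ∀ b, B ≤ b → b ≤ N → v * G b + u * G T + ∑ k ∈ Finset.Ioc b N, G k ∈ A

theorem PathInv.step {R : Type*} [CommRing R] {A : Subring R} {u v : R} {N T B : ℕ} {G : ℕ → R}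
    (hI : PathInv A u v N T B G) (hs : u + v ∈ A) (hp : u * v ∈ A) (T' B' : ℕ)
    (hT : T ≤ T') (hB : B ≤ B') (hBT : B' ≤ T') (hN : T' ≤ N) :
    PathInv A u v N T' B' (stepG u v T' B' G) := by
  have hGT : G T' = G T := hI.hG _ hT
  have key : ∀ F : R, F ∈ A → ∀ b, T' ≤ b →
      (∀ h, T' ≤ h → stepG u v T' B' G h = F) →
      v * stepG u v T' B' G b + u * F + ∑ k ∈ Finset.Ioc b N, stepG u v T' B' G k ∈ A := by
    intro F hF b hb hc
    rw [hc b hb]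
    have : v * F + u * F = (u + v) * F := by ring
    rw [this]
    refine A.add_mem (A.mul_mem hs hF) (A.sum_mem ?_)
    intro k hk
    rw [Finset.mem_Ioc] at hk
    rw [hc k (by omega)]; exact hF
  rcases hBT.eq_or_lt with rfl | hlt
  · have hF : stepG u v B' B' G B' ∈ A := by
      rw [stepG_B _ _ _ _ _ le_rfl, if_pos rfl, hGT]
      exact A.mul_mem hp hI.hF
    exact ⟨fun h hh => stepG_ge _ _ _ _ _ _ hh, hF,
      fun b hb _ => key _ hF b hb (fun h hh => stepG_ge _ _ _ _ _ _ hh)⟩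
  · obtain ⟨M, rfl⟩ : ∃ M, T' = M + 1 := ⟨T' - 1, by omega⟩
    have htail : ∑ k ∈ Finset.Ioc M N, G k ∈ A := by
      refine A.sum_mem ?_
      intro k hk
      rw [Finset.mem_Ioc] at hk
      rw [hI.hG k (by omega)]; exact hI.hF
    have hS : ∀ b, B' ≤ b → b ≤ M → v * G b + u * G T + ∑ k ∈ Finset.Ioc b M, G k ∈ A := by
      intro b hb hbM
      have h1 := A.sub_mem (hI.hS b (by omega) (by omega)) htail
      rw [← Finset.sum_Ioc_consecutive G hbM (by omega : M ≤ N)] at h1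
      convert h1 using 1
      ring
    have hF : stepG u v (M+1) B' G (M+1) ∈ A := by
      rw [stepG_top u v M B' G B' le_rfl (by omega), stepG_B _ _ _ _ _ hlt.le,
        if_neg (by omega), hGT]
      convert hS B' le_rfl (by omega) using 1
      ring
    have hge := fun h hh => stepG_ge u v (M+1) B' G h hh
    refine ⟨hge, hF, fun b hb hbN => ?_⟩
    rcases Nat.lt_or_ge M b with hb' | hb'
    · exact key _ hF b hb' hge
    · have htail' : ∑ k ∈ Finset.Ioc M N, stepG u v (M+1) B' G k ∈ A := by
        refine A.sum_mem ?_
        intro k hk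
        rw [Finset.mem_Ioc] at hk
        rw [hge k (by omega)]; exact hF
      have hdiff : ∑ k ∈ Finset.Ioc b M, (stepG u v (M+1) B' G k - v * G k) ∈ A := by
        refine A.sum_mem ?_
        intro k hk
        rw [Finset.mem_Ioc] at hk
        have h1 := A.sub_mem hF (hS k (by omega) (by omega))
        rw [stepG_top u v M B' G k (by omega) (by omega), hGT] at h1
        convert h1 using 1
        ring
      rw [← Finset.sum_Ioc_consecutive _ hb' (by omega : M ≤ N)]
      have h2 := A.sub_mem (A.mul_mem hs hF) (A.mul_mem hp hI.hF)
      have h3 := A.add_mem (A.add_mem h2 hdiff) htail'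
      convert h3 using 1
      rw [Finset.sum_sub_distrib, ← Finset.mul_sum]
      have h4 := stepG_top u v M B' G b hb hb'
      rw [hGT] at h4
      linear_combination (-v) * h4

def GG {R : Type*} [CommRing R] (u v : R) (T B : ℕ → ℕ) : ℕ → ℕ → R
  | 0 => fun _ => 1
  | n+1 => stepG u v (T n) (B n) (GG u v T B n)

theorem GG_mem {R : Type*} [CommRing R] {A : Subring R} {u v : R} (N : ℕ) (T B : ℕ → ℕ)
    (hs : u + v ∈ A) (hp : u * v ∈ A) (hT : Monotone T) (hB : Monotone B)
    (hBT : ∀ n, B n ≤ T n) (hN : ∀ n, T n ≤ N) (n : ℕ) : GG u v T B n N ∈ A := by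
  have h0 : PathInv A u v N 0 0 (GG u v T B 0) := by
    refine ⟨fun _ _ => rfl, A.one_mem, fun b _ _ => ?_⟩
    simp only [GG, mul_one]
    rw [add_comm v u]
    exact A.add_mem hs (A.sum_mem fun _ _ => A.one_mem)
  have h1 : ∀ n, PathInv A u v N (T n) (B n) (GG u v T B (n+1)) := by
    intro n
    induction n with
    | zero => exact h0.step hs hp _ _ (Nat.zero_le _) (Nat.zero_le _) (hBT _) (hN _)
    | succ n ih => exact ih.step hs hp _ _ (hT (Nat.le_succ n)) (hB (Nat.le_succ n)) (hBT _) (hN _)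
  rcases n with _ | n
  · exact A.one_mem
  · rw [(h1 n).hG N (hN n)]; exact (h1 n).hF

open Classical in
theorem GG_link {R : Type*} [CommRing R] (u v : R) (y : ℕ) (T B : ℕ → ℕ) (x h : ℕ) (hy : h ≤ y) :
    (∑ P : Fin x → Fin (y+1),
      if Monotone P ∧ ∀ j : Fin x, (B j ≤ P j ∧ (P j : ℕ) ≤ T j) ∧ (P j : ℕ) ≤ h then
        ∏ j, ((if (P j : ℕ) = T j then u else 1) * (if (P j : ℕ) = B j then v else 1)) else 0)
    = GG u v T B x h := by
  induction x generalizing h with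
  | zero =>
    simp [GG, Subsingleton.monotone]
  | succ x ih =>
    rw [← (Fin.snocEquiv (fun _ : Fin (x+1) => Fin (y+1))).sum_comp, Fintype.sum_prod_type]
    simp only [GG, stepG]
    have hr : Finset.range (h+1) = (Finset.range (y+1)).filter (· ≤ h) := by
      ext k; simp; omega
    rw [hr, Finset.sum_filter, Finset.sum_range]
    refine Finset.sum_congr rfl fun k _ => ?_
    have hmono : ∀ P : Fin x → Fin (y+1),
        Monotone (Fin.snoc P k : Fin (x+1) → Fin (y+1)) ↔ Monotone P ∧ ∀ j, (P j : ℕ) ≤ k := by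
      intro P
      constructor
      · intro hm
        refine ⟨fun i j hij => ?_, fun j => ?_⟩
        · have := hm (Fin.castSucc_le_castSucc_iff.2 hij)
          simpa using this
        · have := hm (Fin.le_last j.castSucc)
          simpa using this
      · rintro ⟨h1, h2⟩ i j
        induction i using Fin.lastCases with
        | last =>
          intro hij
          rw [Fin.last_le_iff.1 hij]
        | cast i =>
          induction j using Fin.lastCases with
          | last => intro _; simpa using h2 i
          | cast j => intro hij; simpa using h1 (Fin.castSucc_le_castSucc_iff.1 hij)
    simp only [Fin.snocEquiv, Equiv.coe_fn_mk, hmono, Fin.forall_fin_succ', Fin.prod_univ_castSucc,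
      Fin.snoc_castSucc, Fin.snoc_last, Fin.val_castSucc, Fin.val_last]
    by_cases hk : (k : ℕ) ≤ h
    · rw [if_pos hk]
      by_cases hk2 : B x ≤ k ∧ (k : ℕ) ≤ T x
      · rw [if_pos hk2, ← ih k (by omega), Finset.mul_sum]
        refine Finset.sum_congr rfl fun P _ => ?_
        generalize ((if (k : ℕ) = T x then u else 1) * (if (k : ℕ) = B x then v else 1)) = w
        rw [mul_ite, mul_zero]
        refine if_congr ?_ (mul_comm _ _) rfl
        constructor
        · rintro ⟨⟨a, b⟩, c, d⟩
          exact ⟨a, fun j => ⟨(c j).1, b j⟩⟩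
        · rintro ⟨a, b⟩
          exact ⟨⟨a, fun j => (b j).2⟩, fun j => ⟨(b j).1, (b j).2.trans hk⟩, hk2, hk⟩
      · rw [if_neg hk2]
        exact Finset.sum_eq_zero fun P _ => if_neg fun hc => hk2 hc.2.2.1
    · rw [if_neg hk]
      exact Finset.sum_eq_zero fun P _ => if_neg fun hc => hk hc.2.2.2

open Classical in
theorem sum_symm {R : Type*} [CommRing R] (A : Subring R) (u v : R) 
    (hs : u + v ∈ A) (hp : u * v ∈ A) {x y : ℕ} (T B : Fin x → Fin (y+1))
    (hT : Monotone T) (hB : Monotone B) (hTB : ∀ j, B j ≤ T j) :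
    (∑ P : Fin x → Fin (y+1), if InP T B P then u ^ ccount T P * v ^ ccount B P else 0) ∈ A := by
  let e : (Fin x → Fin (y+1)) → ℕ → ℕ := fun Q n => if h : n < x then Q ⟨n, h⟩ else y
  have he : ∀ Q, Monotone Q → Monotone (e Q) := by
    intro Q hQ i j hij
    simp only [e]
    by_cases hj : j < x
    · rw [dif_pos hj, dif_pos (by omega)]
      exact hQ (by simpa using hij)
    · rw [dif_neg hj]
      split_ifs <;> omega
  have hle : ∀ n, e B n ≤ e T n := by
    intro n
    simp only [e]
    split_ifs with h
    · exact hTB _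
    · exact le_rfl
  have hN : ∀ n, e T n ≤ y := by
    intro n
    simp only [e]
    split_ifs <;> omega
  have hv : ∀ Q (j : Fin x), e Q j = Q j := by
    intro Q j
    simp [e]
  have h1 := GG_mem (A := A) y (e T) (e B) hs hp (he T hT) (he B hB) hle hN x
  rw [← GG_link u v y _ _ x y le_rfl] at h1
  convert h1 using 1
  refine Finset.sum_congr rfl fun P _ => ?_
  refine if_congr ?_ ?_ rfl
  · simp only [hv, InP, Fin.le_def]
    refine and_congr_right fun _ => forall_congr' fun j => ?_
    have := (P j).2
    constructor
    · intro h; exact ⟨h, by omega⟩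
    · intro h; exact h.1
  · simp only [hv, Finset.prod_mul_distrib, Finset.prod_ite, Finset.prod_const, one_pow, mul_one,
      ccount, Nat.card_eq_fintype_card, Fintype.card_subtype, Fin.ext_iff]

open Classical in
theorem card_coeff {x y : ℕ} (T B : Fin x → Fin (y+1)) (a c : ℕ) :
    (Nat.card {P : Fin x → Fin (y+1) // InP T B P ∧ ccount T P = a ∧ ccount B P = c} : ℤ)
    = MvPolynomial.coeff (Finsupp.single true a + Finsupp.single false c)
      (∑ P : Fin x → Fin (y+1), if InP T B P then
        (MvPolynomial.X true : MvPolynomial Bool ℤ) ^ ccount T P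
          * MvPolynomial.X false ^ ccount B P else 0) := by
  rw [MvPolynomial.coeff_sum, Nat.card_eq_fintype_card, Fintype.card_subtype, Finset.card_filter,
    Nat.cast_sum]
  refine Finset.sum_congr rfl fun P _ => ?_
  by_cases h : InP T B P
  · rw [if_pos h, MvPolynomial.X_pow_eq_monomial, MvPolynomial.X_pow_eq_monomial,
      MvPolynomial.monomial_mul, MvPolynomial.coeff_monomial]
    have : (Finsupp.single true (ccount T P) + Finsupp.single false (ccount B P) =
      Finsupp.single true a + Finsupp.single false c) ↔ (ccount T P = a ∧ ccount B P = c) := by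
      constructor
      · intro h
        have h1 := DFunLike.congr_fun h true
        have h2 := DFunLike.congr_fun h false
        simp at h1 h2
        exact ⟨h1, h2⟩
      · rintro ⟨rfl, rfl⟩; rfl
    simp [this, h]
  · simp [h]

/-- The joint distribution of `(t, b)` over `P(T,B)` is symmetric. -/
theorem stmt0 {x y : ℕ} (T B : Fin x → Fin (y+1))
    (hT : Monotone T) (hB : Monotone B) (hTB : ∀ j, B j ≤ T j) (a c : ℕ) :
    Nat.card {P : Fin x → Fin (y+1) // InP T B P ∧ ccount T P = a ∧ ccount B P = c}
    = Nat.card {P : Fin x → Fin (y+1) // InP T B P ∧ ccount T P = c ∧ ccount B P = a} := by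
  classical
  let s : MvPolynomial Bool ℤ →+* MvPolynomial Bool ℤ := (MvPolynomial.rename Bool.not).toRingHom
  have hmem := sum_symm (RingHom.eqLocus s (RingHom.id _))
    (MvPolynomial.X true : MvPolynomial Bool ℤ) (MvPolynomial.X false)
    (by simp [s, RingHom.mem_eqLocus, add_comm]) (by simp [s, RingHom.mem_eqLocus, mul_comm])
    T B hT hB hTB
  have h1 : MvPolynomial.rename Bool.not (∑ P : Fin x → Fin (y+1), if InP T B P then
        (MvPolynomial.X true : MvPolynomial Bool ℤ) ^ ccount T P
          * MvPolynomial.X false ^ ccount B P else 0) = _ := hmem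
  have hinj : Function.Injective Bool.not := fun a b h => by simpa using h
  have h2 := card_coeff T B a c
  have h3 := card_coeff T B c a
  rw [← MvPolynomial.coeff_rename_mapDomain Bool.not hinj, h1] at h2
  rw [Finsupp.mapDomain_add, Finsupp.mapDomain_single, Finsupp.mapDomain_single,
    add_comm (Finsupp.single _ _)] at h2
  have h4 := h2.trans h3.symm
  exact_mod_cast h4
end

section
/- Let k ≥ 1. For every permutation σ of {0,1,…,k} and all natural numbers a_0,…,a_k, the number of tuples P ∈ P^k(T,B) with h_i(P) = a_i for all 0 ≤ i ≤ k equals the number of tuples P ∈ P^k(T,B) with h_i(P) = a_{σ(i)} for all 0 ≤ i ≤ k. (The joint distribution of (h_0,…,h_k) over P^k(T,B) is symmetric.) -/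
/-- A `k`-tuple of paths lies in `P^k(T,B)`: every path lies in `P(T,B)` and
each path lies weakly above the next one. -/
def InPk {x y k : ℕ} (T B : Fin x → Fin (y+1)) (P : Fin k → Fin x → Fin (y+1)) : Prop :=
  (∀ i, InP T B (P i)) ∧
  ∀ (i : Fin k) (hi : (i : ℕ) + 1 < k) (j : Fin x), P ⟨(i : ℕ) + 1, hi⟩ j ≤ P i j

/-- The extended tuple, with the conventions `P_0 = T` and `P_{k+1} = B`. -/
def extP {x y k : ℕ} (T B : Fin x → Fin (y+1)) (P : Fin k → Fin x → Fin (y+1))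
    (i : Fin (k+2)) : Fin x → Fin (y+1) :=
  if h0 : (i : ℕ) = 0 then T
  else if hk1 : (i : ℕ) = k + 1 then B
  else P ⟨(i : ℕ) - 1, by have := i.isLt; omega⟩

/-- `hstat T B P i` is the number of east steps shared by `P_i` and `P_{i+1}`
(with the conventions `P_0 = T`, `P_{k+1} = B`). -/
noncomputable def hstat {x y k : ℕ} (T B : Fin x → Fin (y+1))
    (P : Fin k → Fin x → Fin (y+1)) (i : Fin (k+1)) : ℕ :=
  Nat.card {j : Fin x // extP T B P i.castSucc j = extP T B P i.succ j}

section aux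
variable {R : Type*} [CommRing R]

def Fw (s t : R) (T B : ℕ → ℕ) : ℕ → ℕ → R
  | 0, _ => 1
  | n+1, v => ∑ u ∈ Finset.Icc (B n) (min v (T n)),
      (if u = T n then s else 1) * (if u = B n then t else 1) * Fw s t T B n u

def Zw (s t : R) (T B : ℕ → ℕ) (n : ℕ) : R := Fw s t T B n (T n)

def capT (T : ℕ → ℕ) (c : ℕ) : ℕ → ℕ := fun i => min (T i) c

theorem capT_mono {T : ℕ → ℕ} (hT : Monotone T) (c : ℕ) : Monotone (capT T c) :=
  fun _ _ h => min_le_min_right _ (hT h)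

theorem Fw_top (s t : R) {T B : ℕ → ℕ} (hT : Monotone T) (n v : ℕ) (h : ∀ i < n, T i ≤ v) :
    Fw s t T B n v = Zw s t T B n := by
  unfold Zw
  cases n with
  | zero => simp [Fw]
  | succ n =>
    have h1 := h n (by omega)
    have h2 : T n ≤ T (n+1) := hT (by omega)
    simp only [Fw, min_eq_right h1, min_eq_right h2]

theorem Fw_cap_lt (s t : R) {T B : ℕ → ℕ} (c : ℕ) (n : ℕ) : ∀ v < c,
    Fw s t (capT T c) B n v = Fw s t T B n v := by
  induction n with
  | zero => intro v _; rfl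
  | succ n ih =>
    intro v hv
    have h1 : min v (capT T c n) = min v (T n) := by unfold capT; omega
    simp only [Fw, h1]
    refine Finset.sum_congr rfl fun u hu => ?_
    have hu' := (Finset.mem_Icc.1 hu).2
    have h2 : (u = capT T c n) = (u = T n) := by
      unfold capT; apply propext; omega
    have h3 := ih u (by omega)
    simp only [h2, h3]

theorem Fw_cap_ge (s t : R) {T B : ℕ → ℕ} (c : ℕ) (n : ℕ) (h : ∀ i < n, T i ≤ c) : ∀ v,
    Fw s t (capT T c) B n v = Fw s t T B n v := by
  induction n with
  | zero => intro v; rfl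
  | succ n ih =>
    intro v
    have h1 : capT T c n = T n := min_eq_left (h n (by omega))
    simp only [Fw, h1]
    refine Finset.sum_congr rfl fun u hu => ?_
    rw [ih (fun i hi => h i (by omega)) u]

theorem Z_eq (s t : R) {T B : ℕ → ℕ} (hT : Monotone T) (n : ℕ) (h : B n = T n) :
    Zw s t T B (n+1) = s * t * Zw s t T B n := by
  have h2 : T n ≤ T (n+1) := hT (by omega)
  simp only [Zw, Fw, min_eq_right h2, h, Finset.Icc_self, Finset.sum_singleton, if_true]

theorem Z_lt (s t : R) {T B : ℕ → ℕ} (hT : Monotone T) (n c : ℕ) (hc : T n = c + 1)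
    (h : B n ≤ c) :
    Zw s t T B (n+1) = s * Zw s t T B n + Fw s t T B (n+1) c := by
  have h2 : T n ≤ T (n+1) := hT (by omega)
  have h3 : c ≤ T n := by omega
  have h4 : c + 1 ≠ B n := by omega
  simp only [Zw, Fw, min_eq_right h2, min_eq_left h3]
  rw [hc, Finset.sum_Icc_succ_top (by omega)]
  simp [h4]; ring

theorem F_lt (s t : R) {T B : ℕ → ℕ} (n d : ℕ) (hc : d + 1 < T n)
    (h : B n ≤ d) :
    Fw s t T B (n+1) (d+1) = Fw s t T B n (d+1) + Fw s t T B (n+1) d := by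
  have h2 : d + 1 ≤ T n := by omega
  have h3 : d ≤ T n := by omega
  have h4 : d + 1 ≠ B n := by omega
  have h5 : d + 1 ≠ T n := by omega
  simp only [Fw, min_eq_left h2, min_eq_left h3]
  rw [Finset.sum_Icc_succ_top (by omega)]
  simp [h4, h5]; ring

theorem F_eq (s t : R) {T B : ℕ → ℕ} (n c : ℕ) (hc : c < T n)
    (h : B n = c) :
    Fw s t T B (n+1) c = t * Fw s t T B n c := by
  have h3 : c ≤ T n := by omega
  have h5 : c ≠ T n := by omega
  simp only [Fw, min_eq_left h3, h]
  simp [h5]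

theorem Z_cap (s t : R) {T B : ℕ → ℕ} (hT : Monotone T) (hB : Monotone B) (d n : ℕ)
    (h : T n = d + 2) (hb : B n ≤ d) :
    Zw s t T B (n+1) = Zw s t (capT T (d+1)) B (n+1) + Zw s t T B n := by
  induction n with
  | zero =>
    have hc : capT T (d+1) 0 = d + 1 := by unfold capT; omega
    rw [Z_lt s t hT 0 (d+1) h (by omega), F_lt s t 0 d (by omega) hb,
      Z_lt s t (capT_mono hT _) 0 d hc hb, Fw_cap_lt s t (d+1) _ d (by omega)]
    simp [Zw, Fw]; ring
  | succ m ih =>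
    have hc : capT T (d+1) (m+1) = d + 1 := by unfold capT; omega
    rw [Z_lt s t hT (m+1) (d+1) h (by omega), F_lt s t (m+1) d (by omega) hb,
      Z_lt s t (capT_mono hT _) (m+1) d hc hb, Fw_cap_lt s t (d+1) _ d (by omega)]
    have hm : T m ≤ T (m+1) := hT (by omega)
    have hbm : B m ≤ B (m+1) := hB (by omega)
    by_cases hTm : T m ≤ d + 1
    · have hle : ∀ i < m+1, T i ≤ d+1 := fun i hi => (hT (by omega : i ≤ m)).trans hTm
      have e1 := Fw_top s t (B := B) hT (m+1) (d+1) hle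
      have e2 := Fw_cap_ge s t (B := B) (d+1) (m+1) hle (d+1)
      have e3 : Zw s t (capT T (d+1)) B (m+1) = Fw s t (capT T (d+1)) B (m+1) (d+1) := by
        unfold Zw; rw [hc]
      rw [e3, e2, e1]; ring
    · have e := ih (by omega) (by omega)
      have e1 := Z_lt s t hT (B := B) m (d+1) (by omega) (by omega)
      linear_combination s * e - e1

theorem Z_symm (s t : R) {B : ℕ → ℕ} (hB : Monotone B) (n : ℕ) :
    ∀ (T : ℕ → ℕ), Monotone T → (∀ i < n, B i ≤ T i) →
    Zw s t T B n = Zw t s T B n := by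
  induction n using Nat.strong_induction_on with
  | _ n IH =>
  cases n with
  | zero => intros; simp [Zw, Fw]
  | succ n =>
    suffices H : ∀ h, ∀ (T : ℕ → ℕ), T n = h → Monotone T → (∀ i < n+1, B i ≤ T i) →
      Zw s t T B (n+1) = Zw t s T B (n+1) from fun T => H _ T rfl
    intro h
    induction h with
    | zero =>
      intro T h0 hT hBT
      have := hBT n (by omega)
      rw [Z_eq s t hT n (by omega), Z_eq t s hT n (by omega),
        IH n (by omega) T hT (fun i hi => hBT i (by omega))]
      ring
    | succ c ih =>
      intro T h0 hT hBT
      have hn := hBT n (by omega)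
      have IHn := IH n (by omega) T hT (fun i hi => hBT i (by omega))
      rcases Nat.lt_trichotomy (B n) c with hb | hb | hb
      · obtain ⟨d, rfl⟩ : ∃ d, c = d + 1 := ⟨c - 1, by omega⟩
        rw [Z_cap s t hT hB d n h0 (by omega), Z_cap t s hT hB d n h0 (by omega), IHn,
          ih _ (by unfold capT; omega) (capT_mono hT _)]
        intro i hi
        have := hBT i hi
        have : B i ≤ B n := hB (by omega)
        unfold capT; omega
      · rw [Z_lt s t hT n c h0 hb.le, Z_lt t s hT n c h0 hb.le, F_eq s t n c (by omega) hb,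
          F_eq t s n c (by omega) hb]
        by_cases hle : ∀ i < n, T i ≤ c
        · rw [Fw_top s t hT n c hle, Fw_top t s hT n c hle, IHn]; ring
        · cases n with
          | zero => simp at hle
          | succ m =>
            have hm : T m ≤ T (m+1) := hT (by omega)
            have hbm : B m ≤ B (m+1) := hB (by omega)
            have hTm : T m = c + 1 := by
              by_contra hne
              exact hle fun i hi => (hT (by omega : i ≤ m)).trans (by omega)
            have e1 := Z_lt s t hT (B := B) m c hTm (by omega)
            have e2 := Z_lt t s hT (B := B) m c hTm (by omega)
            have IHm := IH m (by omega) T hT (fun i hi => hBT i (by omega))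
            linear_combination (s+t) * IHn - t * e1 + s * e2 - s * t * IHm
      · rw [Z_eq s t hT n (by omega), Z_eq t s hT n (by omega), IHn]
        ring

theorem Fw_sum (s t : R) (y : ℕ) (T B : ℕ → ℕ) (hy : ∀ i, T i ≤ y) (n : ℕ) : ∀ v,
    Fw s t T B n v = ∑ P : Fin n → Fin (y+1), open Classical in
      if Monotone P ∧ ∀ j : Fin n, B j ≤ P j ∧ (P j : ℕ) ≤ T j ∧ (P j : ℕ) ≤ v then
        ∏ j, ((if (P j : ℕ) = T j then s else 1) * (if (P j : ℕ) = B j then t else 1)) else 0 := by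
  classical
  induction n with
  | zero =>
    intro v
    simp [Fw, Subsingleton.monotone]
  | succ n ih =>
    intro v
    rw [← (Fin.snocEquiv (fun _ : Fin (n+1) => Fin (y+1))).sum_comp, Fintype.sum_prod_type]
    have h1 : Finset.Icc (B n) (min v (T n)) =
        (Finset.range (y+1)).filter (fun u => B n ≤ u ∧ u ≤ T n ∧ u ≤ v) := by
      ext u
      have := hy n
      simp only [Finset.mem_Icc, Finset.mem_filter, Finset.mem_range]
      omega
    simp only [Fw]
    rw [h1, Finset.sum_filter, ← Fin.sum_univ_eq_sum_range (fun u => if B n ≤ u ∧ u ≤ T n ∧ u ≤ v then (if u = T n then s else 1) * (if u = B n then t else 1) * Fw s t T B n u else 0)]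
    refine Finset.sum_congr rfl fun u _ => ?_
    have key : ∀ P : Fin n → Fin (y+1),
      (Monotone (Fin.snoc (α := fun _ => Fin (y+1)) P u) ∧ ∀ j : Fin (n+1), B j ≤ (Fin.snoc (α := fun _ => Fin (y+1)) P u j : Fin (y+1)) ∧
        ((Fin.snoc (α := fun _ => Fin (y+1)) P u j : Fin (y+1)) : ℕ) ≤ T j ∧ ((Fin.snoc (α := fun _ => Fin (y+1)) P u j : Fin (y+1)) : ℕ) ≤ v) ↔
      ((B n ≤ u ∧ u ≤ T n ∧ u ≤ v) ∧ (Monotone P ∧ ∀ j : Fin n, B j ≤ P j ∧ (P j : ℕ) ≤ T j ∧ (P j : ℕ) ≤ u)) := by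
      intro P
      constructor
      · rintro ⟨hm, hj⟩
        refine ⟨by simpa using hj (Fin.last n), ?_, ?_⟩
        · intro a b hab
          simpa using hm (Fin.castSucc_le_castSucc_iff.2 hab)
        · intro j
          have h2 := hj j.castSucc
          have h3 := hm (Fin.le_last j.castSucc)
          simp only [Fin.snoc_castSucc, Fin.snoc_last, Fin.val_castSucc] at h2 h3
          exact ⟨h2.1, h2.2.1, h3⟩
      · rintro ⟨hu, hm, hj⟩
        refine ⟨?_, ?_⟩
        · intro a b
          refine Fin.lastCases ?_ (fun b => ?_) b
          · intro _
            refine Fin.lastCases ?_ (fun a => ?_) a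
            · simp
            · simpa using (hj a).2.2
          · refine Fin.lastCases ?_ (fun a => ?_) a
            · intro h
              exact absurd h (not_le.2 (Fin.castSucc_lt_last b))
            · intro h
              simpa using hm (Fin.castSucc_le_castSucc_iff.1 h)
        · intro j
          refine Fin.lastCases ?_ (fun j => ?_) j
          · simpa using hu
          · have := hj j
            have h4 : (P j : ℕ) ≤ v := this.2.2.trans hu.2.2
            simpa using ⟨this.1, this.2.1, h4⟩
    rw [ih u]
    by_cases hu : B n ≤ u ∧ (u : ℕ) ≤ T n ∧ (u : ℕ) ≤ v
    · rw [if_pos hu, Finset.mul_sum]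
      refine Finset.sum_congr rfl fun P _ => ?_
      by_cases hP : Monotone P ∧ ∀ j : Fin n, B j ≤ P j ∧ (P j : ℕ) ≤ T j ∧ (P j : ℕ) ≤ u
      · refine Eq.trans ?_ (if_pos ((key P).2 ⟨hu, hP⟩)).symm
        rw [if_pos hP, Fin.prod_univ_castSucc]
        simp [Fin.snocEquiv]
        ring_nf
      · refine Eq.trans ?_ (if_neg (fun h => hP ((key P).1 h).2)).symm
        rw [if_neg hP, mul_zero]
    · rw [if_neg hu]
      symm
      refine Finset.sum_eq_zero fun P _ => ?_
      exact if_neg (fun h => hu ((key P).1 h).1)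
end aux

noncomputable def hc {x y : ℕ} (A C : Fin x → Fin (y+1)) : ℕ := Nat.card {j // A j = C j}

def extN {x y : ℕ} (T : Fin x → Fin (y+1)) : ℕ → ℕ :=
  fun i => if h : i < x then T ⟨i, h⟩ else y

theorem extN_le {x y : ℕ} (T : Fin x → Fin (y+1)) (i : ℕ) : extN T i ≤ y := by
  unfold extN; split <;> omega

theorem extN_mono {x y : ℕ} {T : Fin x → Fin (y+1)} (hT : Monotone T) : Monotone (extN T) := by
  intro a b hab
  by_cases hb : b < x
  · have ha : a < x := by omega
    simp only [extN, ha, hb, dif_pos]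
    exact hT (by simpa using hab)
  · have : extN T b = y := by simp [extN, hb]
    rw [this]; exact extN_le T a

theorem extN_fin {x y : ℕ} (T : Fin x → Fin (y+1)) (j : Fin x) : extN T j = T j := by
  simp [extN]

open Classical in
theorem Zw_sum {R : Type*} [CommRing R] (s t : R) {x y : ℕ} (T B : Fin x → Fin (y+1))
    (hT : Monotone T) :
    Zw s t (extN T) (extN B) x = ∑ P : Fin x → Fin (y+1),
      if InP T B P then s ^ hc T P * t ^ hc P B else 0 := by
  rw [← Fw_top s t (extN_mono hT) x y (fun i _ => extN_le T i), Fw_sum s t y _ _ (extN_le T)]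
  refine Finset.sum_congr rfl fun P _ => ?_
  have h1 : (Monotone P ∧ ∀ j : Fin x, extN B j ≤ P j ∧ (P j : ℕ) ≤ extN T j ∧ (P j : ℕ) ≤ y) ↔
      InP T B P := by
    unfold InP
    refine and_congr_right fun _ => forall_congr' fun j => ?_
    rw [extN_fin, extN_fin, Fin.le_def, Fin.le_def]
    have := (P j).isLt
    omega
  rw [if_congr h1 rfl rfl]
  congr 1
  rw [Finset.prod_mul_distrib]
  congr 1
  · simp only [extN_fin, ← Fin.ext_iff, eq_comm (a := P _)]
    rw [Finset.prod_ite, Finset.prod_const_one, mul_one, Finset.prod_const, hc,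
      Nat.card_eq_fintype_card, Fintype.card_subtype]
  · simp only [extN_fin, ← Fin.ext_iff]
    rw [Finset.prod_ite, Finset.prod_const_one, mul_one, Finset.prod_const, hc,
      Nat.card_eq_fintype_card, Fintype.card_subtype]

open Classical in
theorem one_count {x y : ℕ} (T B : Fin x → Fin (y+1)) (hT : Monotone T) (hB : Monotone B)
    (hTB : ∀ j, B j ≤ T j) (a b : ℕ) :
    Nat.card {P : {P // InP T B P} // hc T P.1 = a ∧ hc P.1 B = b} =
    Nat.card {P : {P // InP T B P} // hc P.1 B = a ∧ hc T P.1 = b} := by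
  have h := Z_symm (Polynomial.C Polynomial.X : Polynomial (Polynomial ℤ)) Polynomial.X
    (extN_mono hB) x (extN T) (extN_mono hT) (by
      intro i hi
      simp only [extN, hi, dif_pos]
      exact hTB _)
  rw [Zw_sum _ _ T B hT, Zw_sum _ _ T B hT] at h
  have h2 := congrArg (fun p : Polynomial (Polynomial ℤ) => (p.coeff b).coeff a) h
  have key : ∀ (f g : (Fin x → Fin (y+1)) → ℕ),
      ((∑ P : Fin x → Fin (y+1), if InP T B P then
        (Polynomial.C Polynomial.X : Polynomial (Polynomial ℤ)) ^ f P * Polynomial.X ^ g P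
        else 0).coeff b).coeff a =
      (Nat.card {P : {P // InP T B P} // f P.1 = a ∧ g P.1 = b} : ℤ) := by
    intro f g
    have e : {P : {P // InP T B P} // f P.1 = a ∧ g P.1 = b} ≃
        {P // InP T B P ∧ f P = a ∧ g P = b} :=
      Equiv.subtypeSubtypeEquivSubtypeInter (InP T B) (fun P => f P = a ∧ g P = b)
    rw [Nat.card_congr e, Nat.card_eq_fintype_card, Fintype.card_subtype,
      Finset.card_filter, Polynomial.finsetSum_coeff, Polynomial.finsetSum_coeff]
    push_cast
    refine Finset.sum_congr rfl fun P _ => ?_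
    by_cases hP : InP T B P
    · simp only [hP, if_true, true_and, ← Polynomial.C_pow, Polynomial.coeff_C_mul,
        Polynomial.coeff_X_pow]
      by_cases h3 : b = g P
      · by_cases h4 : a = f P
        · simp [h3, h4]
        · simp [h3, h4, Polynomial.coeff_X_pow, Ne.symm h4]
      · simp [h3, Ne.symm h3]
    · simp [hP]
  have k1 := key (fun P => hc T P) (fun P => hc P B)
  have k2 := key (fun P => hc P B) (fun P => hc T P)
  simp only [] at h2 k1 k2
  rw [k1] at h2
  simp only [mul_comm (Polynomial.X ^ _) ((Polynomial.C Polynomial.X : Polynomial (Polynomial ℤ)) ^ _)] at h2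
  rw [k2] at h2
  exact_mod_cast h2

theorem one_fun {x y : ℕ} (T B : Fin x → Fin (y+1)) :
    ∃ e : (Fin x → Fin (y+1)) → (Fin x → Fin (y+1)), Monotone T → Monotone B →
      (∀ p, InP T B p → InP T B (e p) ∧ hc T (e p) = hc p B ∧ hc (e p) B = hc T p) ∧
      (∀ p q, InP T B p → InP T B q → e p = e q → p = q) := by
  classical
  by_cases H : Monotone T ∧ Monotone B ∧ ∀ j, B j ≤ T j
  swap
  · refine ⟨id, fun hT hB => ⟨fun p hp => ?_, fun p q _ _ h => h⟩⟩
    exact absurd ⟨hT, hB, fun j => (hp.2 j).1.trans (hp.2 j).2⟩ H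
  obtain ⟨hT, hB, hTB⟩ := H
  let f : {P // InP T B P} → ℕ × ℕ := fun P => (hc T P.1, hc P.1 B)
  let g : {P // InP T B P} → ℕ × ℕ := fun P => (hc P.1 B, hc T P.1)
  have hfg : ∀ ab : ℕ × ℕ, Nonempty ({P // f P = ab} ≃ {P // g P = ab}) := by
    rintro ⟨a, b⟩
    refine Finite.card_eq.1 ?_
    simpa only [f, g, Prod.mk.injEq] using one_count T B hT hB hTB a b
  let E : {P // InP T B P} ≃ {P // InP T B P} :=
    (Equiv.sigmaFiberEquiv f).symm.trans
      ((Equiv.sigmaCongrRight fun ab => (hfg ab).some).trans (Equiv.sigmaFiberEquiv g))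
  have hE : ∀ P, g (E P) = f P := fun P => ((hfg (f P)).some ⟨P, rfl⟩).2
  refine ⟨fun p => if h : InP T B p then (E ⟨p, h⟩).1 else p, fun _ _ => ⟨?_, ?_⟩⟩
  · intro p hp
    have := hE ⟨p, hp⟩
    simp only [f, g, Prod.mk.injEq] at this
    simp only [hp, dif_pos]
    exact ⟨(E ⟨p, hp⟩).2, this.2, this.1⟩
  · intro p q hp hq h
    simp only [hp, hq, dif_pos] at h
    have := E.injective (Subtype.ext h)
    exact congrArg Subtype.val this

theorem extP_mid {x y k : ℕ} (T B : Fin x → Fin (y+1)) (P : Fin k → Fin x → Fin (y+1))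
    (i : Fin k) : extP T B P i.castSucc.succ = P i := by
  have := i.isLt
  have h : ¬ ((i : ℕ) = k) := by omega
  simp [extP, h]

theorem extP_zero {x y k : ℕ} (T B : Fin x → Fin (y+1)) (P : Fin k → Fin x → Fin (y+1)) :
    extP T B P 0 = T := by
  simp [extP]

theorem extP_last {x y k : ℕ} (T B : Fin x → Fin (y+1)) (P : Fin k → Fin x → Fin (y+1)) :
    extP T B P (Fin.last _) = B := by
  simp [extP]

theorem extP_cases {k : ℕ} {motive : Fin (k+2) → Prop} (h0 : motive 0)
    (hl : motive (Fin.last _)) (hm : ∀ i : Fin k, motive i.castSucc.succ) (r : Fin (k+2)) :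
    motive r := by
  refine Fin.cases h0 (fun r => ?_) r
  exact Fin.lastCases hl hm r

theorem InPk_iff {x y k : ℕ} {T B : Fin x → Fin (y+1)} (hT : Monotone T) (hB : Monotone B)
    (hTB : ∀ j, B j ≤ T j) (P : Fin k → Fin x → Fin (y+1)) :
    InPk T B P ↔ (∀ r, Monotone (extP T B P r)) ∧
      ∀ r : Fin (k+1), extP T B P r.succ ≤ extP T B P r.castSucc := by
  constructor
  · rintro ⟨h1, h2⟩
    refine ⟨fun r => ?_, fun r => ?_⟩
    · refine extP_cases (motive := fun r => Monotone (extP T B P r)) ?_ ?_ ?_ r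
      · rwa [extP_zero]
      · rwa [extP_last]
      · intro i; rw [extP_mid]; exact (h1 i).1
    · refine Fin.cases ?_ (fun i => ?_) r
      · rw [Fin.castSucc_zero, extP_zero]
        refine extP_cases (motive := fun r => extP T B P r ≤ T) ?_ ?_ ?_ _
        · rw [extP_zero]
        · rw [extP_last]; exact hTB
        · intro i; rw [extP_mid]; exact fun j => ((h1 i).2 j).2
      · rw [← Fin.succ_castSucc, extP_mid]
        by_cases hi : (i : ℕ) + 1 < k
        · have : i.succ.succ = (⟨(i:ℕ)+1, hi⟩ : Fin k).castSucc.succ := by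
            ext; simp
          rw [this, extP_mid]
          exact fun j => h2 i hi j
        · have : i.succ.succ = Fin.last _ := by
            ext; have := i.isLt; simp; omega
          rw [this, extP_last]
          exact fun j => ((h1 i).2 j).1
  · rintro ⟨h1, h2⟩
    have ha : Antitone (extP T B P) := Fin.antitone_iff_succ_le.2 h2
    refine ⟨fun i => ⟨?_, fun j => ⟨?_, ?_⟩⟩, fun i hi j => ?_⟩
    · rw [← extP_mid T B P i]; exact h1 _
    · have := ha (Fin.le_last i.castSucc.succ) j
      rwa [extP_mid, extP_last] at this
    · have := ha (Fin.zero_le i.castSucc.succ) j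
      rwa [extP_mid, extP_zero] at this
    · rw [← extP_mid T B P i, ← extP_mid T B P ⟨(i:ℕ)+1, hi⟩]
      refine ha ?_ j
      simp [Fin.le_def]

theorem extP_update_same {x y k : ℕ} (T B : Fin x → Fin (y+1)) (P : Fin k → Fin x → Fin (y+1))
    (i : Fin k) (q) : extP T B (Function.update P i q) i.castSucc.succ = q := by
  rw [extP_mid]; simp

theorem extP_update_ne {x y k : ℕ} (T B : Fin x → Fin (y+1)) (P : Fin k → Fin x → Fin (y+1))
    (i : Fin k) (q) (r : Fin (k+2)) (hr : r ≠ i.castSucc.succ) :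
    extP T B (Function.update P i q) r = extP T B P r := by
  revert hr
  refine extP_cases (motive := fun r => r ≠ i.castSucc.succ →
    extP T B (Function.update P i q) r = extP T B P r) ?_ ?_ ?_ r
  · intro _; rw [extP_zero, extP_zero]
  · intro _; rw [extP_last, extP_last]
  · intro l hl
    rw [extP_mid, extP_mid, Function.update_of_ne]
    rintro rfl; exact hl rfl

theorem swap_le {x y k : ℕ} (T B : Fin x → Fin (y+1))
    (hT : Monotone T) (hB : Monotone B) (hTB : ∀ j, B j ≤ T j) (i : Fin k)
    (a : Fin (k+1) → ℕ) :
    Nat.card {P : Fin k → Fin x → Fin (y+1) //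
        InPk T B P ∧ ∀ i, hstat T B P i = a i}
    ≤ Nat.card {P : Fin k → Fin x → Fin (y+1) //
        InPk T B P ∧ ∀ r, hstat T B P r = a (Equiv.swap i.castSucc i.succ r)} := by
  choose φ hφ using @one_fun x y
  let lo : Fin (k+2) := i.castSucc.castSucc
  let hi : Fin (k+2) := i.succ.succ
  have hlo : lo ≠ i.castSucc.succ := by simp [lo, Fin.ext_iff]
  have hhi : hi ≠ i.castSucc.succ := by simp [hi, Fin.ext_iff]
  let q : (Fin k → Fin x → Fin (y+1)) → (Fin x → Fin (y+1)) := fun P =>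
    φ (extP T B P lo) (extP T B P hi) (P i)
  have hin : ∀ P, InPk T B P → InP (extP T B P lo) (extP T B P hi) (P i) := by
    intro P hP
    obtain ⟨h1, h2⟩ := (InPk_iff hT hB hTB P).1 hP
    refine ⟨(hP.1 i).1, fun j => ⟨?_, ?_⟩⟩
    · have := h2 i.succ j
      rwa [← Fin.succ_castSucc, extP_mid] at this
    · have := h2 i.castSucc j
      rwa [extP_mid] at this
  have hq : ∀ P, InPk T B P → InP (extP T B P lo) (extP T B P hi) (q P) ∧
      hc (extP T B P lo) (q P) = hc (P i) (extP T B P hi) ∧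
      hc (q P) (extP T B P hi) = hc (extP T B P lo) (P i) := by
    intro P hP
    obtain ⟨h1, h2⟩ := (InPk_iff hT hB hTB P).1 hP
    exact (hφ _ _ (h1 _) (h1 _)).1 _ (hin P hP)
  have hne1 : ∀ r : Fin (k+1), r ≠ i.castSucc → r.succ ≠ i.castSucc.succ := by
    intro r hr h; exact hr (Fin.succ_injective _ h)
  have hne2 : ∀ r : Fin (k+1), r ≠ i.succ → r.castSucc ≠ i.castSucc.succ := by
    intro r hr h; rw [Fin.succ_castSucc] at h; exact hr (Fin.castSucc_injective _ h)
  have hsne : i.succ ≠ i.castSucc := by simp [Fin.ext_iff]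
  refine Nat.card_le_card_of_injective
    (fun P => ⟨Function.update P.1 i (q P.1), ?_, ?_⟩) ?_
  · obtain ⟨P, hP, ha⟩ := P
    obtain ⟨h1, h2⟩ := (InPk_iff hT hB hTB P).1 hP
    obtain ⟨hq1, -, -⟩ := hq P hP
    refine (InPk_iff hT hB hTB _).2 ⟨fun r => ?_, fun r => ?_⟩
    · by_cases hr : r = i.castSucc.succ
      · subst hr; rw [extP_update_same]; exact hq1.1
      · rw [extP_update_ne _ _ _ _ _ _ hr]; exact h1 r
    · by_cases hr1 : r = i.castSucc
      · subst hr1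
        rw [extP_update_same, extP_update_ne _ _ _ _ _ _ hlo]
        exact fun j => (hq1.2 j).2
      · rw [extP_update_ne _ _ _ _ _ _ (hne1 r hr1)]
        by_cases hr2 : r = i.succ
        · subst hr2
          rw [← Fin.succ_castSucc, extP_update_same]
          exact fun j => (hq1.2 j).1
        · rw [extP_update_ne _ _ _ _ _ _ (hne2 r hr2)]
          exact h2 r
  · obtain ⟨P, hP, ha⟩ := P
    obtain ⟨-, hq1, hq2⟩ := hq P hP
    intro r
    change hc (extP T B _ _) (extP T B _ _) = _
    have ha' : ∀ r : Fin (k+1), hc (extP T B P r.castSucc) (extP T B P r.succ) = a r := ha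
    by_cases hr1 : r = i.castSucc
    · subst hr1
      rw [extP_update_same, extP_update_ne _ _ _ _ _ _ hlo, Equiv.swap_apply_left, ← ha',
        ← Fin.succ_castSucc, extP_mid]
      exact hq1
    · rw [extP_update_ne _ _ _ _ _ _ (hne1 r hr1)]
      by_cases hr2 : r = i.succ
      · subst hr2
        rw [← Fin.succ_castSucc, extP_update_same, Equiv.swap_apply_right, ← ha', extP_mid]
        exact hq2
      · rw [extP_update_ne _ _ _ _ _ _ (hne2 r hr2), Equiv.swap_apply_of_ne_of_ne hr1 hr2]
        exact ha' r
  · rintro ⟨P, hP, ha⟩ ⟨P', hP', ha'⟩ h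
    have h : Function.update P i (q P) = Function.update P' i (q P') := congrArg Subtype.val h
    have hl : extP T B P lo = extP T B P' lo := by
      rw [← extP_update_ne T B P i (q P) lo hlo, h, extP_update_ne _ _ _ _ _ _ hlo]
    have hh : extP T B P hi = extP T B P' hi := by
      rw [← extP_update_ne T B P i (q P) hi hhi, h, extP_update_ne _ _ _ _ _ _ hhi]
    have hqq : q P = q P' := by simpa using congrFun h i
    obtain ⟨h1, h2⟩ := (InPk_iff hT hB hTB P).1 hP
    have hi1 := hin P hP
    have hi2 := hin P' hP'
    simp only [q] at hqq
    rw [← hl, ← hh] at hqq hi2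
    have hPi := (hφ _ _ (h1 _) (h1 _)).2 _ _ hi1 hi2 hqq
    refine Subtype.ext (funext fun l => ?_)
    by_cases hli : l = i
    · subst hli; exact hPi
    · have := congrFun h l
      simpa [hli] using this

/-- The joint distribution of `(h_0, …, h_k)` over `P^k(T,B)` is symmetric. -/
theorem stmt2 {x y : ℕ} (k : ℕ) (hk : 1 ≤ k) (T B : Fin x → Fin (y+1))
    (hT : Monotone T) (hB : Monotone B) (hTB : ∀ j, B j ≤ T j)
    (σ : Equiv.Perm (Fin (k+1))) (a : Fin (k+1) → ℕ) :
    Nat.card {P : Fin k → Fin x → Fin (y+1) //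
        InPk T B P ∧ ∀ i, hstat T B P i = a i}
    = Nat.card {P : Fin k → Fin x → Fin (y+1) //
        InPk T B P ∧ ∀ i, hstat T B P i = a (σ i)} := by
  have step : ∀ (i : Fin k) (a : Fin (k+1) → ℕ),
      Nat.card {P : Fin k → Fin x → Fin (y+1) // InPk T B P ∧ ∀ i, hstat T B P i = a i}
      = Nat.card {P : Fin k → Fin x → Fin (y+1) //
        InPk T B P ∧ ∀ r, hstat T B P r = a (Equiv.swap i.castSucc i.succ r)} := by
    intro i a
    refine le_antisymm (swap_le T B hT hB hTB i a) ?_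
    have := swap_le T B hT hB hTB i (fun r => a (Equiv.swap i.castSucc i.succ r))
    simpa only [Equiv.swap_apply_self] using this
  have hσ : σ ∈ Submonoid.closure
      (Set.range fun i : Fin k => Equiv.swap i.castSucc i.succ) := by
    rw [Equiv.Perm.mclosure_swap_castSucc_succ]; trivial
  induction hσ using Submonoid.closure_induction generalizing a with
  | mem τ hτ =>
    obtain ⟨i, rfl⟩ := hτ
    exact step i a
  | one => rfl
  | mul τ ρ _ _ h1 h2 =>
    rw [h1 a, h2 (fun r => a (τ r))]
    rfl
end

section
/- Let k ≥ 1 and, for P ∈ P^k(T,B), define v_i(P) = #{m ∈ Fin y : g_{P_i}(m) = g_{P_{i+1}}(m)} for 0 ≤ i ≤ k (the number of north steps shared by P_i and P_{i+1}), and set t(P) = h_0(P), b(P) = h_k(P), ℓ(P) = v_0(P), r(P) = v_k(P). For all natural numbers a and c, the number of tuples P ∈ P^k(T,B) with b(P) = a and ℓ(P) = c equals the number of tuples P ∈ P^k(T,B) with t(P) = a and r(P) = c. -/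
/-- `gstat P i` is the x-coordinate of the `i`-th north step of the path `P`. -/
noncomputable def gstat {x y : ℕ} (P : Fin x → Fin (y+1)) (i : Fin y) : ℕ :=
  Nat.card {j : Fin x // (P j : ℕ) ≤ (i : ℕ)}

/-- `vstat T B P i` is the number of north steps shared by `P_i` and `P_{i+1}`. -/
noncomputable def vstat {x y k : ℕ} (T B : Fin x → Fin (y+1))
    (P : Fin k → Fin x → Fin (y+1)) (i : Fin (k+1)) : ℕ :=
  Nat.card {m : Fin y // gstat (extP T B P i.castSucc) m = gstat (extP T B P i.succ) m}

namespace LP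
open Finset

def hs {x : ℕ} (P Q : Fin x → ℕ) : ℕ := ∑ j, if P j = Q j then 1 else 0
def gs {x : ℕ} (P : Fin x → ℕ) (m : ℕ) : ℕ := ∑ j, if P j ≤ m then 1 else 0
def vs {x : ℕ} (y : ℕ) (P Q : Fin x → ℕ) : ℕ :=
  ∑ m ∈ range y, if gs P m = gs Q m then 1 else 0

noncomputable def paths {x : ℕ} (T B : Fin x → ℕ) : Finset (Fin x → ℕ) :=
  by classical exact (Fintype.piFinset fun j => Finset.Icc (B j) (T j)).filter Monotone

lemma mem_paths {x : ℕ} {T B P : Fin x → ℕ} :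
    P ∈ paths T B ↔ (∀ j, B j ≤ P j ∧ P j ≤ T j) ∧ Monotone P := by
  simp [paths, Fintype.mem_piFinset]

variable {R : Type*} [CommSemiring R]

noncomputable def S1 (p q : R) {x : ℕ} (y : ℕ) (T B : Fin x → ℕ) : R :=
  ∑ P ∈ paths T B, p ^ hs T P * q ^ vs y P B
noncomputable def S2 (p q : R) {x : ℕ} (y : ℕ) (T B : Fin x → ℕ) : R :=
  ∑ P ∈ paths T B, p ^ hs P B * q ^ vs y T P

def prd {x : ℕ} (T : Fin x → ℕ) : Fin x → ℕ := fun j => T j - 1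
def mn {x : ℕ} (y : ℕ) (T : Fin x → ℕ) : Fin x → ℕ := fun j => min (T j) y

lemma hs_succ {n : ℕ} (P Q : Fin (n+1) → ℕ) :
    hs P Q = (if P 0 = Q 0 then 1 else 0) + hs (Fin.tail P) (Fin.tail Q) := by
  unfold hs; rw [Fin.sum_univ_succ]; rfl
lemma gs_succ {n : ℕ} (P : Fin (n+1) → ℕ) (m : ℕ) :
    gs P m = (if P 0 ≤ m then 1 else 0) + gs (Fin.tail P) m := by
  unfold gs; rw [Fin.sum_univ_succ]; rfl
lemma hs_last {n : ℕ} (P Q : Fin (n+1) → ℕ) :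
    hs P Q = hs (Fin.init P) (Fin.init Q) +
      (if P (Fin.last n) = Q (Fin.last n) then 1 else 0) := by
  unfold hs; rw [Fin.sum_univ_castSucc]; rfl
lemma gs_last {n : ℕ} (P : Fin (n+1) → ℕ) (m : ℕ) :
    gs P m = gs (Fin.init P) m + (if P (Fin.last n) ≤ m then 1 else 0) := by
  unfold gs; rw [Fin.sum_univ_castSucc]; rfl
lemma gs_prd {x : ℕ} (P : Fin x → ℕ) (m : ℕ) : gs (prd P) m = gs P (m+1) := by
  simp [gs, prd]
lemma gs_mn {x : ℕ} (y : ℕ) (P : Fin x → ℕ) (m : ℕ) (h : m < y) : gs (mn y P) m = gs P m := by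
  unfold gs mn
  apply sum_congr rfl
  intro j _
  congr 1
  simp only [eq_iff_iff]
  omega
lemma gs_zero {n : ℕ} (P : Fin (n+1) → ℕ) (hP : Monotone P) : gs P 0 = 0 ↔ 0 < P 0 := by
  simp only [gs, sum_eq_zero_iff, mem_univ, true_imp_iff]
  constructor
  · intro h
    have := h 0
    by_contra h'
    have : P 0 = 0 := by omega
    simp_all
  · intro h j
    have := hP (Fin.zero_le j)
    rw [if_neg (by omega)]
lemma gs_top {n : ℕ} (P : Fin (n+1) → ℕ) (hP : Monotone P) (m : ℕ) :
    gs P m = n + 1 ↔ P (Fin.last n) ≤ m := by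
  have h1 : gs P m = #(univ.filter fun j => P j ≤ m) := by simp [gs]
  have h2 : #(univ : Finset (Fin (n+1))) = n + 1 := by simp
  rw [h1]
  conv_lhs => rhs; rw [← h2]
  rw [card_filter_eq_iff]
  constructor
  · intro h
    exact h (Fin.last n) (mem_univ _)
  · intro h j _
    exact (hP (Fin.le_last j)).trans h

lemma first_E (p q : R) {n : ℕ} (y : ℕ) (T B : Fin (n+1) → ℕ) (hB0 : B 0 = 0) :
    ∑ P ∈ paths T B with P 0 = 0, p ^ hs T P * q ^ vs y P B
      = (if T 0 = 0 then p else 1) * S1 p q y (Fin.tail T) (Fin.tail B) := by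
  rw [S1, mul_sum]
  refine sum_nbij' Fin.tail (fun P => (Fin.cons 0 P : Fin (n+1) → ℕ)) ?_ ?_ ?_ ?_ ?_
  · intro P hP
    rw [mem_filter, mem_paths] at hP
    rw [mem_paths]
    exact ⟨fun j => hP.1.1 j.succ, fun i j h => hP.1.2 (Fin.succ_le_succ_iff.2 h)⟩
  · intro P hP
    rw [mem_paths] at hP
    rw [mem_filter, mem_paths]
    refine ⟨⟨fun j => ?_, ?_⟩, by simp⟩
    · refine Fin.cases ?_ (fun j => ?_) j
      · simp [hB0]
      · simpa [Fin.tail, Fin.init] using hP.1 j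
    · intro i j
      refine Fin.cases ?_ (fun i => ?_) i
      · simp
      · refine Fin.cases ?_ (fun j => ?_) j
        · intro h; simp at h
        · intro h; simpa using hP.2 (Fin.succ_le_succ_iff.1 h)
  · intro P hP
    rw [mem_filter] at hP
    rw [← hP.2]; exact Fin.cons_self_tail P
  · intro P _; exact Fin.tail_cons _ _
  · intro P hP
    rw [mem_filter] at hP
    have hv : vs y P B = vs y (Fin.tail P) (Fin.tail B) := by
      unfold vs
      apply sum_congr rfl
      intro m _
      rw [gs_succ P, gs_succ B, hB0, hP.2]
      simp
    rw [hv, hs_succ, hP.2]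
    split_ifs <;> simp [pow_add, mul_assoc]

lemma first_N (p q : R) {n : ℕ} (y : ℕ) (T B : Fin (n+1) → ℕ) (hB : Monotone B)
    (hT : Monotone T) (hT0 : 0 < T 0) :
    ∑ P ∈ paths T B with ¬ P 0 = 0, p ^ hs T P * q ^ vs (y+1) P B
      = (if 0 < B 0 then q else 1) * S1 p q y (prd T) (prd B) := by
  rw [S1, mul_sum]
  have key : ∀ P : Fin (n+1) → ℕ, Monotone P → ¬ P 0 = 0 → ∀ j, 1 ≤ P j := fun P h1 h2 j => by
    have := h1 (Fin.zero_le j); omega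
  have kT := key T hT (by omega)
  refine sum_nbij' prd (fun P j => P j + 1) ?_ ?_ ?_ ?_ ?_
  · intro P hP
    rw [mem_filter, mem_paths] at hP
    rw [mem_paths]
    refine ⟨fun j => ?_, fun i j h => ?_⟩
    · have := hP.1.1 j; simp only [prd]; omega
    · have := hP.1.2 h; simp only [prd]; omega
  · intro P hP
    rw [mem_paths] at hP
    rw [mem_filter, mem_paths]
    refine ⟨⟨fun j => ?_, fun i j h => ?_⟩, by simp⟩
    · have := hP.1 j; have := kT j; simp only [prd] at *; omega
    · have := hP.2 h; simp only; omega
  · intro P hP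
    rw [mem_filter, mem_paths] at hP
    funext j
    have := key P hP.1.2 hP.2 j
    simp only [prd]; omega
  · intro P _; funext j; simp [prd]
  · intro P hP
    rw [mem_filter, mem_paths] at hP
    have hh : hs T P = hs (prd T) (prd P) := by
      unfold hs
      apply sum_congr rfl
      intro j _
      have := key P hP.1.2 hP.2 j
      have := kT j
      congr 1
      simp only [prd, eq_iff_iff]; omega
    have hv : vs (y+1) P B = vs y (prd P) (prd B) + (if 0 < B 0 then 1 else 0) := by
      unfold vs
      rw [sum_range_succ']
      simp only [gs_prd]
      congr 1
      rw [(gs_zero P hP.1.2).2 (by omega)]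
      congr 1
      rw [eq_iff_iff, eq_comm, gs_zero B hB]
    rw [hv, hh]
    split_ifs <;> simp [pow_add]; ring

lemma last_E (p q : R) {n : ℕ} (y : ℕ) (T B : Fin (n+1) → ℕ) (hTl : T (Fin.last n) = y)
    (hT : Monotone T) (hTB : ∀ j, B j ≤ T j) :
    ∑ P ∈ paths T B with P (Fin.last n) = y, p ^ hs P B * q ^ vs y T P
      = (if B (Fin.last n) = y then p else 1) * S2 p q y (Fin.init T) (Fin.init B) := by
  rw [S2, mul_sum]
  refine sum_nbij' Fin.init (fun P => (Fin.snoc P y : Fin (n+1) → ℕ)) ?_ ?_ ?_ ?_ ?_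
  · intro P hP
    rw [mem_filter, mem_paths] at hP
    rw [mem_paths]
    exact ⟨fun j => hP.1.1 j.castSucc, fun i j h => hP.1.2 (Fin.castSucc_le_castSucc_iff.2 h)⟩
  · intro P hP
    rw [mem_paths] at hP
    rw [mem_filter, mem_paths]
    refine ⟨⟨fun j => ?_, ?_⟩, by simp⟩
    · refine Fin.lastCases ?_ (fun j => ?_) j
      · have := hTB (Fin.last n); simp; omega
      · simpa [Fin.tail, Fin.init] using hP.1 j
    · intro i j
      refine Fin.lastCases ?_ (fun j => ?_) j
      · intro _
        refine Fin.lastCases ?_ (fun i => ?_) i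
        · simp
        · have h1 := (hP.1 i).2
          have h2 := hT (Fin.le_last i.castSucc)
          simp only [Fin.snoc_castSucc, Fin.snoc_last, Fin.init] at *
          omega
      · refine Fin.lastCases ?_ (fun i => ?_) i
        · intro h; exact absurd h (not_le.2 (Fin.castSucc_lt_last j))
        · intro h; simpa using hP.2 (Fin.castSucc_le_castSucc_iff.1 h)
  · intro P hP
    rw [mem_filter] at hP
    rw [← hP.2]; exact Fin.snoc_init_self P
  · intro P _; exact Fin.init_snoc (α := fun _ => ℕ) _ _
  · intro P hP
    rw [mem_filter] at hP
    have hv : vs y T P = vs y (Fin.init T) (Fin.init P) := by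
      unfold vs
      apply sum_congr rfl
      intro m _
      rw [gs_last P, gs_last T, hTl, hP.2]
      simp
    rw [hv, hs_last, hP.2]
    by_cases h : B (Fin.last n) = y
    · simp [h, pow_add]; ring
    · simp [h, Ne.symm h]

lemma last_N (p q : R) {n : ℕ} (y : ℕ) (T B : Fin (n+1) → ℕ) (hB : Monotone B)
    (hT : Monotone T) (hTy : T (Fin.last n) ≤ y + 1) (hBl : B (Fin.last n) ≤ y) :
    ∑ P ∈ paths T B with ¬ P (Fin.last n) = y + 1, p ^ hs P B * q ^ vs (y+1) T P
      = (if T (Fin.last n) ≤ y then q else 1) * S2 p q y (mn y T) (mn y B) := by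
  rw [S2, mul_sum]
  have hBm : mn y B = B := by
    funext j; have := hB (Fin.le_last j); simp only [mn]; omega
  rw [hBm]
  have kP : ∀ P, P ∈ paths T B → P (Fin.last n) ≠ y + 1 → ∀ j, P j ≤ y := fun P hP h j => by
    rw [mem_paths] at hP
    have := hP.2 (Fin.le_last j); have := (hP.1 (Fin.last n)).2; omega
  have hset : (paths T B).filter (fun P => ¬ P (Fin.last n) = y + 1) = paths (mn y T) B := by
    ext P
    rw [mem_filter]
    constructor
    · rintro ⟨h, h'⟩
      have k := kP P h h'
      rw [mem_paths] at *
      refine ⟨fun j => ?_, h.2⟩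
      have := h.1 j; have := k j; simp only [mn]; omega
    · intro h
      rw [mem_paths] at *
      refine ⟨⟨fun j => ?_, h.2⟩, ?_⟩
      · have := h.1 j; simp only [mn] at this; omega
      · have := h.1 (Fin.last n); simp only [mn] at this; omega
  rw [← hset]
  apply sum_congr rfl
  intro P hP
  rw [mem_filter] at hP
  have k := kP P hP.1 hP.2
  have hv : vs (y+1) T P = vs y (mn y T) P + (if T (Fin.last n) ≤ y then 1 else 0) := by
    unfold vs
    rw [sum_range_succ]
    congr 1
    · apply sum_congr rfl
      intro m hm
      rw [gs_mn y T m (mem_range.1 hm)]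
    · rw [(gs_top P (mem_paths.1 hP.1).2 y).2 (k _)]
      congr 1
      rw [gs_top T hT]
  rw [hv]
  split_ifs <;> simp [pow_add]; ring

structure Val {x : ℕ} (y : ℕ) (T B : Fin x → ℕ) : Prop where
  hT : Monotone T
  hB : Monotone B
  le : ∀ j, B j ≤ T j
  ty : ∀ j, T j ≤ y

section
variable (p q : R) {n y : ℕ} {T B : Fin (n+1) → ℕ}

lemma S1_split : S1 p q y T B = ∑ P ∈ paths T B with P 0 = 0, p ^ hs T P * q ^ vs y P B +
    ∑ P ∈ paths T B with ¬ P 0 = 0, p ^ hs T P * q ^ vs y P B :=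
  (sum_filter_add_sum_filter_not _ _ _).symm
lemma S2_split (c : ℕ) : S2 p q y T B =
    ∑ P ∈ paths T B with P (Fin.last n) = c, p ^ hs P B * q ^ vs y T P +
    ∑ P ∈ paths T B with ¬ P (Fin.last n) = c, p ^ hs P B * q ^ vs y T P :=
  (sum_filter_add_sum_filter_not _ _ _).symm

lemma S1_EE (h : Val y T B) (h0 : T 0 = 0) :
    S1 p q y T B = p * S1 p q y (Fin.tail T) (Fin.tail B) := by
  rw [S1_split, first_E _ _ _ _ _ (by have := h.le 0; omega), if_pos h0, filter_false_of_mem]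
  · simp
  · intro P hP; have := (mem_paths.1 hP).1 0; omega
lemma S1_NN (h : Val (y+1) T B) (h0 : 0 < B 0) :
    S1 p q (y+1) T B = q * S1 p q y (prd T) (prd B) := by
  rw [S1_split, first_N _ _ _ _ _ h.hB h.hT (by have := h.le 0; omega), if_pos h0,
    filter_false_of_mem]
  · simp
  · intro P hP; have := (mem_paths.1 hP).1 0; omega
lemma S1_D (h : Val (y+1) T B) (h0 : B 0 = 0) (h1 : 0 < T 0) :
    S1 p q (y+1) T B = S1 p q (y+1) (Fin.tail T) (Fin.tail B) + S1 p q y (prd T) (prd B) := by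
  rw [S1_split, first_N _ _ _ _ _ h.hB h.hT h1, first_E _ _ _ _ _ h0, if_neg (by omega),
    if_neg (by omega), one_mul, one_mul]
lemma S2_EE (h : Val y T B) (h0 : B (Fin.last n) = y) :
    S2 p q y T B = p * S2 p q y (Fin.init T) (Fin.init B) := by
  have := h.le (Fin.last n)
  have := h.ty (Fin.last n)
  rw [S2_split p q y, last_E _ _ _ _ _ (by omega) h.hT h.le, if_pos h0, filter_false_of_mem]
  · simp
  · intro P hP; have := (mem_paths.1 hP).1 (Fin.last n); omega
lemma S2_NN (h : Val (y+1) T B) (h0 : T (Fin.last n) ≤ y) :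
    S2 p q (y+1) T B = q * S2 p q y (mn y T) (mn y B) := by
  have := h.le (Fin.last n)
  rw [S2_split p q (y+1), last_N _ _ _ _ _ h.hB h.hT (by omega) (by omega), if_pos h0,
    filter_false_of_mem]
  · simp
  · intro P hP; have := (mem_paths.1 hP).1 (Fin.last n); omega
lemma S2_D (h : Val (y+1) T B) (h0 : T (Fin.last n) = y + 1) (h1 : B (Fin.last n) ≤ y) :
    S2 p q (y+1) T B = S2 p q (y+1) (Fin.init T) (Fin.init B) + S2 p q y (mn y T) (mn y B) := by
  rw [S2_split p q (y+1), last_N _ _ _ _ _ h.hB h.hT (by omega) (by omega),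
   last_E _ _ _ _ _ h0 h.hT h.le, if_neg (by omega), if_neg (by omega), one_mul, one_mul]

lemma Val.tail (h : Val y T B) : Val y (Fin.tail T) (Fin.tail B) :=
  ⟨fun _ _ e => h.hT (Fin.succ_le_succ_iff.2 e), fun _ _ e => h.hB (Fin.succ_le_succ_iff.2 e),
    fun j => h.le j.succ, fun j => h.ty j.succ⟩
lemma Val.init (h : Val y T B) : Val y (Fin.init T) (Fin.init B) :=
  ⟨fun _ _ e => h.hT (Fin.castSucc_le_castSucc_iff.2 e),
    fun _ _ e => h.hB (Fin.castSucc_le_castSucc_iff.2 e),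
    fun j => h.le j.castSucc, fun j => h.ty j.castSucc⟩
end

lemma Val.prd {x y : ℕ} {T B : Fin x → ℕ} (h : Val (y+1) T B) : Val y (prd T) (prd B) :=
  ⟨fun _ _ e => Nat.sub_le_sub_right (h.hT e) 1, fun _ _ e => Nat.sub_le_sub_right (h.hB e) 1,
    fun j => Nat.sub_le_sub_right (h.le j) 1, fun j => Nat.sub_le_of_le_add (h.ty j)⟩
lemma Val.mn {x y y' : ℕ} {T B : Fin x → ℕ} (h : Val y' T B) : Val y (mn y T) (mn y B) :=
  ⟨fun _ _ e => min_le_min_right y (h.hT e), fun _ _ e => min_le_min_right y (h.hB e),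
    fun j => min_le_min_right y (h.le j), fun _ => min_le_right _ _⟩

lemma S1_NN' (p q : R) {x y : ℕ} {T B : Fin x → ℕ} (h : Val (y+1) T B) (h0 : ∀ j, 0 < B j) :
    S1 p q (y+1) T B = q * S1 p q y (LP.prd T) (LP.prd B) := by
  rcases x with _ | n
  · have : ∀ T B : Fin 0 → ℕ, paths T B = {B} := fun T B => by
      ext P; simp [mem_paths, Subsingleton.elim P B, Subsingleton.monotone]
    simp [S1, this, vs, hs, gs, pow_succ, mul_comm]
  · exact S1_NN p q h (h0 0)
lemma S2_NN' (p q : R) {x y : ℕ} {T B : Fin x → ℕ} (h : Val (y+1) T B) (h0 : ∀ j, T j ≤ y) :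
    S2 p q (y+1) T B = q * S2 p q y (LP.mn y T) (LP.mn y B) := by
  rcases x with _ | n
  · have : ∀ T B : Fin 0 → ℕ, paths T B = {B} := fun T B => by
      ext P; simp [mem_paths, Subsingleton.elim P B, Subsingleton.monotone]
    simp [S2, this, vs, hs, gs, pow_succ, mul_comm]
  · exact S2_NN p q h (h0 _)

lemma mn_prd {x : ℕ} (y : ℕ) (T : Fin x → ℕ) : mn y (prd T) = prd (mn (y+1) T) := by
  funext j; simp only [mn, prd]; omega

theorem S_eq (p q : R) (N : ℕ) : ∀ (x y : ℕ) (T B : Fin x → ℕ), x + y = N → Val y T B →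
    S1 p q y T B = S2 p q y T B := by
  induction N using Nat.strong_induction_on with
  | _ N ih0 =>
  intro x y T B hN h
  have ih : ∀ (x' y' : ℕ) (T B : Fin x' → ℕ), x' + y' < x + y → Val y' T B →
    S1 p q y' T B = S2 p q y' T B := fun x' y' T B hl => ih0 _ (hN ▸ hl) x' y' T B rfl
  clear ih0 hN
  rcases x with _ | n
  · unfold S1 S2
    apply sum_congr rfl
    intro P _
    rw [Subsingleton.elim T B, Subsingleton.elim P B]
  have hBT := h.le 0
  have hBTl := h.le (Fin.last n)
  have hTy := h.ty (Fin.last n)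
  have hTT := h.hT (Fin.zero_le (Fin.last n))
  have hBB := h.hB (Fin.zero_le (Fin.last n))
  by_cases hT0 : T 0 = 0
  · rw [S1_EE p q h hT0, ih _ _ _ _ (by omega) h.tail]
    by_cases hBl : B (Fin.last n) = y
    · rw [S2_EE p q h hBl]
      rcases n with _ | n
      · rw [Subsingleton.elim (Fin.tail T) (Fin.init T), Subsingleton.elim (Fin.tail B) (Fin.init B)]
      · rw [S2_EE p q h.tail hBl, ← ih _ _ _ _ (by omega) h.init, S1_EE p q h.init hT0,
          ih _ _ _ _ (by omega) h.init.tail]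
        rfl
    · obtain ⟨y, rfl⟩ : ∃ y', y = y' + 1 := ⟨y - 1, by omega⟩
      have hm0 : mn y T 0 = 0 := by simp [mn, hT0]
      by_cases hTl : T (Fin.last n) = y + 1
      · rcases n with _ | n
        · exfalso; change T 0 = _ at hTl; omega
        rw [S2_D p q h hTl (by omega), S2_D p q h.tail hTl (show B (Fin.last _) ≤ y by omega),
          ← ih _ _ _ _ (by omega) h.init, ← ih _ y _ _ (by omega) h.mn, S1_EE p q h.init hT0,
          S1_EE p q h.mn hm0, ih _ _ _ _ (by omega) h.init.tail,
          ih _ y _ _ (by omega) h.mn.tail, mul_add]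
        rfl
      · have hle : ∀ j, T j ≤ y := fun j => (h.hT (Fin.le_last j)).trans (by omega)
        rw [S2_NN' p q h hle, S2_NN' p q h.tail (fun j => hle _), ← ih _ y _ _ (by omega) h.mn,
          S1_EE p q h.mn hm0, ih _ y _ _ (by omega) h.mn.tail, mul_left_comm]
        rfl
  obtain ⟨y, rfl⟩ : ∃ y', y = y' + 1 := ⟨y - 1, by omega⟩
  by_cases hB0 : B 0 = 0
  · rw [S1_D p q h hB0 (by omega)]
    by_cases hBl : B (Fin.last n) = y + 1
    · rcases n with _ | n
      · exfalso; change B 0 = _ at hBl; omega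
      rw [ih _ _ _ _ (by omega) h.tail, ih _ y _ _ (by omega) h.prd, S2_EE p q h hBl,
        S2_EE p q h.tail hBl,
        S2_EE p q h.prd (show B (Fin.last _) - 1 = y by omega), ← ih _ _ _ _ (by omega) h.init,
        S1_D p q h.init hB0 (show 0 < T 0 by omega), ih _ _ _ _ (by omega) h.init.tail,
        ih _ y _ _ (by omega) h.init.prd, mul_add]
      rfl
    by_cases hTl : T (Fin.last n) = y + 1
    · rw [S2_D p q h hTl (by omega)]
      rcases n with _ | n
      · rw [Subsingleton.elim (Fin.tail T) (Fin.init T), Subsingleton.elim (Fin.tail B) (Fin.init B),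
          ih _ _ _ _ (by omega) h.init, ih _ y _ _ (by omega) h.prd]
        have e1 : prd T = mn y T := by
          funext j; rw [Subsingleton.elim (α := Fin 1) j (Fin.last 0)]; simp only [prd, mn]; omega
        have e2 : prd B = mn y B := by
          funext j; rw [Subsingleton.elim (α := Fin 1) j 0]; simp only [prd, mn]; omega
        rw [e1, e2]
      rcases y with _ | y
      · have kT : ∀ j, T j = 1 := fun j => by
          have := h.hT (Fin.zero_le j); have := h.ty j; omega
        have kB : ∀ j, B j = 0 := fun j => by
          have := h.hB (Fin.le_last j); omega
        have e1 : prd T = mn 0 T := by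
          funext j; simp only [prd, mn, kT]; omega
        have e2 : prd B = mn 0 B := by
          funext j; simp only [prd, mn, kB]; omega
        have e3 : Fin.tail T = Fin.init T := by
          funext j; simp only [Fin.tail, Fin.init, kT]
        have e4 : Fin.tail B = Fin.init B := by
          funext j; simp only [Fin.tail, Fin.init, kB]
        rw [e1, e2, e3, e4, ih _ _ _ _ (by omega) h.init, ih _ 0 _ _ (by omega) h.mn]
      rw [ih _ _ _ _ (by omega) h.tail, ih _ (y+1) _ _ (by omega) h.prd,
        S2_D p q h.tail hTl (show B (Fin.last _) ≤ y + 1 by omega),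
        S2_D p q h.prd (show T (Fin.last _) - 1 = y + 1 by omega)
          (show B (Fin.last _) - 1 ≤ y by omega),
        ← ih _ _ _ _ (by omega) h.init, ← ih _ (y+1) _ _ (by omega) h.mn,
        S1_D p q h.init hB0 (show 0 < T 0 by omega),
        S1_D p q h.mn (show min (B 0) (y+1) = 0 by omega) (show 0 < min (T 0) (y+1) by omega),
        ih _ _ _ _ (by omega) h.init.tail,
        ih _ (y+1) _ _ (by omega) h.init.prd,
        ih _ (y+1) _ _ (by omega) h.mn.tail,
        ih _ y _ _ (by omega) (h.mn (y := y + 1)).prd, mn_prd, mn_prd, add_add_add_comm]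
      rfl
    · have hle : ∀ j, T j ≤ y := fun j => (h.hT (Fin.le_last j)).trans (by omega)
      obtain ⟨y, rfl⟩ : ∃ y', y = y' + 1 := ⟨y - 1, by have := hle 0; omega⟩
      rw [ih _ _ _ _ (by omega) h.tail, ih _ (y+1) _ _ (by omega) h.prd,
        S2_NN' p q h hle, S2_NN' p q h.tail (fun j => hle _),
        S2_NN' p q h.prd (fun j => (show T j - 1 ≤ y by have := hle j; omega)),
        ← ih _ (y+1) _ _ (by omega) h.mn,
        S1_D p q h.mn (show min (B 0) (y+1) = 0 by omega) (show 0 < min (T 0) (y+1) by omega),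
        ih _ (y+1) _ _ (by omega) h.mn.tail,
        ih _ y _ _ (by omega) (h.mn (y := y + 1)).prd, mn_prd, mn_prd, mul_add]
      rfl
  · have hpos : ∀ j, 0 < B j := fun j => by have := h.hB (Fin.zero_le j); omega
    rw [S1_NN' p q h hpos, ih _ y _ _ (by omega) h.prd]
    by_cases hBl : B (Fin.last n) = y + 1
    · rw [S2_EE p q h hBl,
        S2_EE p q h.prd (show B (Fin.last _) - 1 = y by omega), ← ih _ _ _ _ (by omega) h.init,
        S1_NN' p q h.init (fun j => hpos _), ih _ y _ _ (by omega) h.init.prd, mul_left_comm]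
      rfl
    obtain ⟨y, rfl⟩ : ∃ y', y = y' + 1 := ⟨y - 1, by omega⟩
    have hmpos : ∀ j, 0 < mn (y+1) B j := fun j => by have := hpos j; simp only [mn]; omega
    by_cases hTl : T (Fin.last n) = y + 1 + 1
    · rw [S2_D p q h hTl (by omega),
        S2_D p q h.prd (show T (Fin.last _) - 1 = y + 1 by omega)
          (show B (Fin.last _) - 1 ≤ y by omega),
        ← ih _ _ _ _ (by omega) h.init, ← ih _ (y+1) _ _ (by omega) h.mn,
        S1_NN' p q h.init (fun j => hpos _), S1_NN' p q h.mn hmpos,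
        ih _ (y+1) _ _ (by omega) h.init.prd,
        ih _ y _ _ (by omega) (h.mn (y := y + 1)).prd, mn_prd, mn_prd, mul_add]
      rfl
    · have hle : ∀ j, T j ≤ y + 1 := fun j => (h.hT (Fin.le_last j)).trans (by omega)
      rw [S2_NN' p q h hle,
        S2_NN' p q h.prd (fun j => (show T j - 1 ≤ y by have := hle j; omega)),
        ← ih _ (y+1) _ _ (by omega) h.mn, S1_NN' p q h.mn hmpos,
        ih _ y _ _ (by omega) (h.mn (y := y + 1)).prd, mn_prd, mn_prd]

end LP
namespace LP
open Finset

section bridge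
variable {x y : ℕ}

noncomputable def HH (P Q : Fin x → Fin (y+1)) : ℕ := Nat.card {j : Fin x // P j = Q j}
noncomputable def VV (P Q : Fin x → Fin (y+1)) : ℕ :=
  Nat.card {m : Fin y // gstat P m = gstat Q m}
def nn (P : Fin x → Fin (y+1)) : Fin x → ℕ := fun j => (P j : ℕ)

lemma nn_inj : Function.Injective (nn : (Fin x → Fin (y+1)) → _) := by
  intro P Q h
  funext j
  exact Fin.ext (congrFun h j)

lemma HH_eq (P Q : Fin x → Fin (y+1)) : HH P Q = hs (nn P) (nn Q) := by
  unfold HH hs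
  rw [Nat.card_eq_fintype_card, Fintype.card_subtype, card_filter]
  apply sum_congr rfl
  intro j _
  congr 1
  simp only [nn, Fin.ext_iff]
lemma gstat_eq (P : Fin x → Fin (y+1)) (i : Fin y) : gstat P i = gs (nn P) i := by
  unfold gstat gs
  rw [Nat.card_eq_fintype_card, Fintype.card_subtype, card_filter]
  rfl
lemma VV_eq (P Q : Fin x → Fin (y+1)) : VV P Q = vs y (nn P) (nn Q) := by
  unfold VV vs
  rw [Nat.card_eq_fintype_card, Fintype.card_subtype, card_filter, sum_range]
  simp only [gstat_eq]

lemma sum_InP {R : Type*} [CommSemiring R] (T B : Fin x → Fin (y+1)) (f : (Fin x → ℕ) → R)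
    [DecidablePred (InP T B)] :
    ∑ P ∈ paths (nn T) (nn B), f P = ∑ P with InP T B P, f (nn P) := by
  symm
  refine sum_bij (fun P _ => nn P) ?_ ?_ ?_ ?_
  · intro P hP
    simp only [mem_filter, mem_univ, true_and] at hP
    exact mem_paths.2 ⟨fun j => hP.2 j, fun i j h => hP.1 h⟩
  · intro P _ Q _ h; exact nn_inj h
  · intro P hP
    rw [mem_paths] at hP
    refine ⟨fun j => ⟨P j, ?_⟩, ?_, rfl⟩
    · have := (hP.1 j).2; have := (T j).isLt; simp only [nn] at *; omega
    · simp only [mem_filter, mem_univ, true_and]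
      exact ⟨fun i j h => hP.2 h, fun j => hP.1 j⟩
  · intro P _; rfl

open Polynomial in
lemma coeff_aux {α : Type*} (s : Finset α) (f g : α → ℕ) (a c : ℕ) :
    ((∑ P ∈ s, (X : ℕ[X][X]) ^ f P * (C X) ^ g P).coeff a).coeff c
      = #(s.filter fun P => f P = a ∧ g P = c) := by
  rw [finsetSum_coeff, finsetSum_coeff, card_filter]
  apply sum_congr rfl
  intro P _
  rw [← C_pow, coeff_mul_C, coeff_X_pow]
  by_cases h1 : a = f P
  · by_cases h2 : c = g P
    · simp [h1, h2]
    · simp [h1, Ne.symm h2, coeff_X_pow, h2]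
  · simp [h1, Ne.symm h1]

lemma count_eq (T B : Fin x → Fin (y+1)) (hT : Monotone T) (hB : Monotone B)
    (hTB : ∀ j, B j ≤ T j) (a c : ℕ) [DecidablePred (InP T B)] :
    #{P ∈ univ.filter (InP T B) | HH P B = a ∧ VV T P = c}
     = #{P ∈ univ.filter (InP T B) | HH T P = a ∧ VV P B = c} := by
  have h := S_eq (Polynomial.X : Polynomial (Polynomial ℕ)) (Polynomial.C Polynomial.X) _ x y
    (nn T) (nn B) rfl ⟨fun i j h => hT h, fun i j h => hB h, fun j => hTB j,
      fun j => Nat.lt_succ_iff.1 (T j).isLt⟩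
  unfold S1 S2 at h
  rw [sum_InP, sum_InP] at h
  simp only [← HH_eq, ← VV_eq] at h
  have h2 := congrArg (fun z => (z.coeff a).coeff c) h
  simp only [coeff_aux] at h2
  exact h2.symm

lemma exists_equiv {α β : Type*} [Finite α] (f g : α → β)
    (h : ∀ b, Nat.card {a // f a = b} = Nat.card {a // g a = b}) :
    ∃ e : α ≃ α, ∀ a, g (e a) = f a := by
  have h' : ∀ b, Nonempty ({a // f a = b} ≃ {a // g a = b}) := fun b => Finite.card_eq.1 (h b)
  let E := fun b => Classical.choice (h' b)
  refine ⟨(Equiv.sigmaFiberEquiv f).symm.trans ((Equiv.sigmaCongrRight fun b =>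
    E b).trans (Equiv.sigmaFiberEquiv g)), fun a => ?_⟩
  exact (E (f a) ⟨a, rfl⟩).2

lemma exists_perm (T B : Fin x → Fin (y+1)) : ∃ σ : Equiv.Perm (Fin x → Fin (y+1)),
    Monotone T → Monotone B → (∀ j, B j ≤ T j) → ∀ P, InP T B P →
      InP T B (σ P) ∧ InP T B (σ.symm P) ∧ HH T (σ P) = HH P B ∧ VV (σ P) B = VV T P := by
  classical
  by_cases hv : Monotone T ∧ Monotone B ∧ (∀ j, B j ≤ T j)
  swap
  · exact ⟨Equiv.refl _, fun h1 h2 h3 => absurd ⟨h1, h2, h3⟩ hv⟩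
  obtain ⟨hT, hB, hTB⟩ := hv
  obtain ⟨e, he⟩ := exists_equiv (α := {P // InP T B P}) (fun P => (HH P.1 B, VV T P.1))
    (fun P => (HH T P.1, VV P.1 B)) (by
      rintro ⟨a, c⟩
      have key : ∀ (f g : (Fin x → Fin (y+1)) → ℕ),
          Nat.card {P : {P // InP T B P} // (f P.1, g P.1) = (a, c)}
            = #{P ∈ univ.filter (InP T B) | f P = a ∧ g P = c} := by
        intro f g
        rw [Nat.card_congr (Equiv.subtypeSubtypeEquivSubtypeInter (InP T B)
          (fun P => (f P, g P) = (a, c))), Nat.card_eq_fintype_card, Fintype.card_subtype,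
          filter_filter]
        simp only [Prod.mk.injEq]
      rw [key (fun P => HH P B) (fun P => VV T P), key (fun P => HH T P) (fun P => VV P B)]
      exact count_eq T B hT hB hTB a c)
  refine ⟨Equiv.Perm.ofSubtype e, fun _ _ _ P hP => ?_⟩
  have h1 : Equiv.Perm.ofSubtype e P = (e ⟨P, hP⟩).1 := Equiv.Perm.ofSubtype_apply_of_mem e hP
  have h2 : (Equiv.Perm.ofSubtype e).symm P = (e.symm ⟨P, hP⟩).1 := by
    rw [Equiv.symm_apply_eq, Equiv.Perm.ofSubtype_apply_of_mem e (e.symm ⟨P, hP⟩).2]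
    simp
  have h3 := he ⟨P, hP⟩
  simp only [Prod.mk.injEq] at h3
  rw [h1, h2]
  exact ⟨(e _).2, (e.symm _).2, h3.1, h3.2⟩

end bridge

section tuples
variable {x y k : ℕ} (T B : Fin x → Fin (y+1))

lemma InPk_iff (hT : Monotone T) (hB : Monotone B) (hTB : ∀ j, B j ≤ T j)
    (P : Fin k → Fin x → Fin (y+1)) :
    InPk T B P ↔ (∀ m, Monotone (extP T B P m)) ∧
      ∀ m : Fin (k+1), extP T B P m.succ ≤ extP T B P m.castSucc := by
  have e0 : extP T B P 0 = T := by simp [extP]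
  have el : extP T B P (Fin.last (k+1)) = B := by simp [extP]
  have em : ∀ i : Fin k, extP T B P i.succ.castSucc = P i := fun i => by
    have := i.isLt
    simp [extP, this.ne]
  constructor
  · rintro ⟨h1, h2⟩
    refine ⟨fun m => ?_, fun m => ?_⟩
    · unfold extP
      split_ifs
      · exact hT
      · exact hB
      · exact (h1 _).1
    · refine Fin.cases ?_ (fun i => ?_) m
      · rcases k with _ | k
        · rw [Fin.castSucc_zero, e0]
          have : extP T B P (Fin.succ 0) = B := el
          rw [this]; exact hTB
        · rw [Fin.castSucc_zero, e0]
          have : extP T B P (Fin.succ 0) = P 0 := em 0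
          rw [this]; exact fun j => ((h1 0).2 j).2
      · rw [em]
        by_cases hi : (i : ℕ) + 1 < k
        · have := em ⟨i + 1, hi⟩
          have e : i.succ.succ = (Fin.mk (i+1) hi : Fin k).succ.castSucc := by
            ext; simp
          rw [e, this]; exact h2 i hi
        · have e : i.succ.succ = Fin.last (k+1) := by
            ext; simp; omega
          rw [e, el]; exact fun j => ((h1 i).2 j).1
  · rintro ⟨h1, h2⟩
    have ha : Antitone (extP T B P) := Fin.antitone_iff_succ_le.2 h2
    refine ⟨fun i => ⟨?_, fun j => ⟨?_, ?_⟩⟩, fun i hi j => ?_⟩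
    · rw [← em]; exact h1 _
    · rw [← em i]; conv_lhs => rw [← el]
      exact ha (Fin.le_last _) j
    · rw [← em i]; conv_rhs => rw [← e0]
      exact ha (Fin.zero_le _) j
    · rw [← em i, ← em]
      exact ha (by simp [Fin.le_def]) j

lemma extP_mid (P : Fin k → Fin x → Fin (y+1)) (i : Fin k) :
    extP T B P i.succ.castSucc = P i := by
  have := i.isLt
  simp [extP, this.ne]

lemma extP_update (P : Fin k → Fin x → Fin (y+1)) (i : Fin k) (v) :
    extP T B (Function.update P i v) = Function.update (extP T B P) i.succ.castSucc v := by
  funext m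
  by_cases h : m = i.succ.castSucc
  · subst h
    rw [extP_mid]; simp
  · rw [Function.update_of_ne h]
    unfold extP
    split_ifs with h1 h2
    · rfl
    · rfl
    · rw [Function.update_of_ne]
      intro h'
      apply h
      ext
      have := congrArg Fin.val h'
      simp at this ⊢
      omega

abbrev Fam (x y : ℕ) := (Fin x → Fin (y+1)) → (Fin x → Fin (y+1)) →
  Equiv.Perm (Fin x → Fin (y+1))

lemma ne_lo (i : Fin k) : i.castSucc.castSucc ≠ i.succ.castSucc := by
  simp [Fin.ext_iff]
lemma ne_hi (i : Fin k) : i.succ.succ ≠ i.succ.castSucc := by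
  simp [Fin.ext_iff]

def upd (σ : Fam x y) (i : Fin k) (P : Fin k → Fin x → Fin (y+1)) : Fin k → Fin x → Fin (y+1) :=
  Function.update P i (σ (extP T B P i.castSucc.castSucc) (extP T B P i.succ.succ) (P i))

lemma upd_inv (σ τ : Fam x y) (h : ∀ U L P, τ U L (σ U L P) = P) (i : Fin k)
    (P : Fin k → Fin x → Fin (y+1)) : upd T B τ i (upd T B σ i P) = P := by
  unfold upd
  rw [extP_update, Function.update_of_ne (ne_lo i), Function.update_of_ne (ne_hi i)]
  simp [h]

lemma upd_InPk (hT : Monotone T) (hB : Monotone B) (hTB : ∀ j, B j ≤ T j) (σ : Fam x y)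
    (hσ : ∀ U L, Monotone U → Monotone L → (∀ j, L j ≤ U j) → ∀ P, InP U L P → InP U L (σ U L P))
    (i : Fin k) (P : Fin k → Fin x → Fin (y+1)) (hP : InPk T B P) :
    InPk T B (upd T B σ i P) := by
  rw [InPk_iff T B hT hB hTB] at hP ⊢
  obtain ⟨h1, h2⟩ := hP
  have ha : Antitone (extP T B P) := Fin.antitone_iff_succ_le.2 h2
  have hlo := h2 i.castSucc
  have hhi := h2 i.succ
  rw [Fin.succ_castSucc, extP_mid] at hlo
  rw [extP_mid] at hhi
  have hq := hσ _ _ (h1 i.castSucc.castSucc) (h1 i.succ.succ) (fun j => (hhi.trans hlo) j) (P i)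
    ⟨by rw [← extP_mid T B P i]; exact h1 _, fun j => ⟨hhi j, hlo j⟩⟩
  unfold upd
  rw [extP_update]
  set v := σ (extP T B P i.castSucc.castSucc) (extP T B P i.succ.succ) (P i)
  refine ⟨fun m => ?_, fun m => ?_⟩
  · by_cases h : m = i.succ.castSucc
    · subst h; simpa using hq.1
    · rw [Function.update_of_ne h]; exact h1 m
  · by_cases h : m = i.succ
    · subst h
      rw [Function.update_self, Function.update_of_ne (ne_hi i)]
      exact fun j => (hq.2 j).1
    · by_cases h' : m = i.castSucc
      · subst h'
        rw [Fin.succ_castSucc, Function.update_self, Function.update_of_ne (ne_lo i)]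
        exact fun j => (hq.2 j).2
      · rw [Function.update_of_ne, Function.update_of_ne]
        · exact h2 m
        · intro e; exact h (Fin.castSucc_injective _ e)
        · intro e; rw [← Fin.succ_castSucc] at e; exact h' (Fin.succ_injective _ e)

noncomputable def NN (T B : Fin x → Fin (y+1)) (a c : ℕ) (s u : Fin (k+1)) : ℕ :=
  Nat.card {P : Fin k → Fin x → Fin (y+1) //
        InPk T B P ∧ hstat T B P s = a ∧ vstat T B P u = c}

/-- the local move -/
lemma exists_move (hT : Monotone T) (hB : Monotone B) (hTB : ∀ j, B j ≤ T j) (i : Fin k) :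
    ∃ Φ : Equiv.Perm (Fin k → Fin x → Fin (y+1)),
      (∀ P, InPk T B (Φ P) ↔ InPk T B P) ∧
      ∀ P, InPk T B P →
        (hstat T B (Φ P) i.castSucc = hstat T B P i.succ ∧
         vstat T B (Φ P) i.succ = vstat T B P i.castSucc ∧
         ∀ m, m ≠ i.castSucc → m ≠ i.succ →
          hstat T B (Φ P) m = hstat T B P m ∧ vstat T B (Φ P) m = vstat T B P m) := by
  choose σ hσ using (exists_perm : ∀ T B : Fin x → Fin (y+1), _)
  have i1 := upd_inv (k := k) T B σ (fun U L => (σ U L).symm) (fun U L P => by simp) i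
  have i2 := upd_inv (k := k) T B (fun U L => (σ U L).symm) σ (fun U L P => by simp) i
  have p1 := upd_InPk T B hT hB hTB σ (fun U L a b c P h => (hσ U L a b c P h).1) i
  have p2 := upd_InPk T B hT hB hTB (fun U L => (σ U L).symm)
    (fun U L a b c P h => (hσ U L a b c P h).2.1) i
  refine ⟨⟨upd T B σ i, upd T B (fun U L => (σ U L).symm) i, i1, i2⟩, fun P => ?_, fun P hP => ?_⟩
  · exact ⟨fun h => by rw [← i1 P]; exact p2 _ h, p1 P⟩
  · have hs' : ∀ (P : Fin k → Fin x → Fin (y+1)) m, hstat T B P m =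
      HH (extP T B P m.castSucc) (extP T B P m.succ) := fun _ _ => rfl
    have vs' : ∀ (P : Fin k → Fin x → Fin (y+1)) m, vstat T B P m =
      VV (extP T B P m.castSucc) (extP T B P m.succ) := fun _ _ => rfl
    rw [InPk_iff T B hT hB hTB] at hP
    obtain ⟨h1, h2⟩ := hP
    have hlo := h2 i.castSucc
    have hhi := h2 i.succ
    rw [Fin.succ_castSucc, extP_mid] at hlo
    rw [extP_mid] at hhi
    have hq := hσ _ _ (h1 i.castSucc.castSucc) (h1 i.succ.succ) (fun j => (hhi.trans hlo) j) (P i)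
      ⟨by rw [← extP_mid T B P i]; exact h1 _, fun j => ⟨hhi j, hlo j⟩⟩
    simp only [Equiv.coe_fn_mk, hs', vs']
    unfold upd
    rw [extP_update]
    refine ⟨?_, ?_, fun m hm1 hm2 => ?_⟩
    · rw [Fin.succ_castSucc, Function.update_self, Function.update_of_ne (ne_lo i), extP_mid]
      exact hq.2.2.1
    · rw [Fin.succ_castSucc, Function.update_self, Function.update_of_ne (ne_hi i), extP_mid]
      exact hq.2.2.2
    · rw [Function.update_of_ne, Function.update_of_ne]
      · exact ⟨rfl, rfl⟩
      · intro e; rw [← Fin.succ_castSucc] at e; exact hm1 (Fin.succ_injective _ e)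
      · intro e; exact hm2 (Fin.castSucc_injective _ e)

lemma NN_move (a c : ℕ) (Φ : Equiv.Perm (Fin k → Fin x → Fin (y+1)))
    (h1 : ∀ P, InPk T B (Φ P) ↔ InPk T B P) (s u s' u' : Fin (k+1))
    (h2 : ∀ P, InPk T B P → hstat T B (Φ P) s' = hstat T B P s ∧
      vstat T B (Φ P) u' = vstat T B P u) :
    NN T B a c s u = NN T B a c s' u' := by
  refine Nat.card_congr (Φ.subtypeEquiv fun P => ?_)
  rw [h1]
  refine and_congr_right fun hP => ?_
  rw [(h2 P hP).1, (h2 P hP).2]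

end tuples
end LP

/-- The pairs `(b, ℓ) = (h_k, v_0)` and `(t, r) = (h_0, v_k)` have the same joint
distribution over `P^k(T,B)`. -/
theorem stmt3 {x y : ℕ} (k : ℕ) (hk : 1 ≤ k) (T B : Fin x → Fin (y+1))
    (hT : Monotone T) (hB : Monotone B) (hTB : ∀ j, B j ≤ T j) (a c : ℕ) :
    Nat.card {P : Fin k → Fin x → Fin (y+1) //
        InPk T B P ∧ hstat T B P (Fin.last k) = a ∧ vstat T B P 0 = c}
    = Nat.card {P : Fin k → Fin x → Fin (y+1) //
        InPk T B P ∧ hstat T B P 0 = a ∧ vstat T B P (Fin.last k) = c} := by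
  obtain ⟨K, rfl⟩ : ∃ K, k = K + 1 := ⟨k - 1, by omega⟩
  change LP.NN T B a c (Fin.last (K+1)) 0 = LP.NN T B a c 0 (Fin.last (K+1))
  have st1 : ∀ m (hm : m ≤ K), LP.NN T B a c (Fin.last (K+1)) 0 =
      LP.NN T B a c (Fin.last (K+1)) ⟨m, by omega⟩ := by
    intro m
    induction m with
    | zero => intro _; rfl
    | succ m ih =>
      intro hm
      rw [ih (by omega)]
      obtain ⟨Φ, f1, f2⟩ := LP.exists_move T B hT hB hTB (⟨m, by omega⟩ : Fin (K+1))
      refine LP.NN_move T B a c Φ f1 _ _ _ _ fun P hP => ⟨((f2 P hP).2.2 _ ?_ ?_).1, (f2 P hP).2.1⟩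
      · simp [Fin.ext_iff]; omega
      · simp [Fin.ext_iff]; omega
  have st3 : ∀ m (hm : m ≤ K), LP.NN T B a c ⟨m, by omega⟩ (Fin.last (K+1)) =
      LP.NN T B a c 0 (Fin.last (K+1)) := by
    intro m
    induction m with
    | zero => intro _; rfl
    | succ m ih =>
      intro hm
      rw [← ih (by omega)]
      obtain ⟨Φ, f1, f2⟩ := LP.exists_move T B hT hB hTB (⟨m, by omega⟩ : Fin (K+1))
      refine LP.NN_move T B a c Φ f1 _ _ _ _ fun P hP => ⟨(f2 P hP).1, ((f2 P hP).2.2 _ ?_ ?_).2⟩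
      · simp [Fin.ext_iff]; omega
      · simp [Fin.ext_iff]; omega
  rw [st1 K le_rfl, ← st3 K le_rfl]
  obtain ⟨Φ, f1, f2⟩ := LP.exists_move T B hT hB hTB (Fin.last K)
  exact LP.NN_move T B a c Φ f1 _ _ _ _ fun P hP => ⟨(f2 P hP).1, (f2 P hP).2.1⟩
end

section
/- Assume y ≥ 2, T j = y for all j ∈ Fin x (the boundary T = N^y E^x), and B (x−1) < y (B ends with a north step). Then for all natural numbers i, j with i + j ≤ x, the number of P ∈ P(T,B) with t(P) = i and b(P) = j equals the number of weakly increasing maps h : Fin (x−i−j) → Fin (y−1) with h m ≥ B m for all m ∈ Fin (x−i−j) (lattice paths with north and east steps from (0,0) to (x−i−j, y−2) staying weakly above B). -/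
def cc10 {n : ℕ} (B : ℕ → ℕ) (h : Fin n → ℕ) : ℕ := ∑ m : Fin n, if h m = B m then 1 else 0

def F10 (B : ℕ → ℕ) (n k j : ℕ) : Set (Fin n → ℕ) :=
  {h | Monotone h ∧ (∀ m : Fin n, B m ≤ h m ∧ h m ≤ k) ∧ cc10 B h = j}

def G10 (B : ℕ → ℕ) (n k : ℕ) : Set (Fin n → ℕ) :=
  {h | Monotone h ∧ (∀ m : Fin n, B m ≤ h m ∧ h m < k)}

def A10 (B : ℕ → ℕ) (y n i j : ℕ) : Set (Fin n → ℕ) :=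
  {h | Monotone h ∧ (∀ m : Fin n, B m ≤ h m ∧ h m ≤ y) ∧ cc10 (fun _ => y) h = i ∧ cc10 B h = j}

lemma fin10 {n : ℕ} (k : ℕ) (S : Set (Fin n → ℕ)) (hS : ∀ h ∈ S, ∀ m, h m ≤ k) : S.Finite :=
  (Set.finite_Iic (fun _ : Fin n => k)).subset (fun h hh m => hS h hh m)

lemma snoc10 {n : ℕ} (k : ℕ) (S : Set (Fin (n+1) → ℕ)) (S' : Set (Fin n → ℕ))
    (hS : ∀ h ∈ S, h (Fin.last n) = k)
    (hS' : ∀ g : Fin n → ℕ, (Fin.snoc g k : Fin (n+1) → ℕ) ∈ S ↔ g ∈ S') : S.ncard = S'.ncard := by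
  have hinj : Function.Injective (fun g : Fin n → ℕ => (Fin.snoc g k : Fin (n+1) → ℕ)) := by
    intro a b hab
    have := congrArg Fin.init hab
    simpa [Fin.init_snoc] using this
  rw [← Set.ncard_image_of_injective S' hinj]
  congr 1
  ext h
  constructor
  · intro hh
    have e : (Fin.snoc (Fin.init h) k : Fin (n+1) → ℕ) = h := by
      rw [← hS h hh]; exact Fin.snoc_init_self h
    exact ⟨Fin.init h, (hS' _).1 (by rw [e]; exact hh), e⟩
  · rintro ⟨g, hg, rfl⟩
    exact (hS' g).2 hg

lemma mono10 {n : ℕ} (g : Fin n → ℕ) (k : ℕ) :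
    Monotone (Fin.snoc g k : Fin (n+1) → ℕ) ↔ Monotone g ∧ ∀ m, g m ≤ k := by
  constructor
  · intro h
    refine ⟨fun a b hab => ?_, fun m => ?_⟩
    · have := h (Fin.castSucc_le_castSucc_iff.2 hab)
      simpa using this
    · have := h (Fin.le_last m.castSucc)
      simpa using this
  · rintro ⟨h, hk⟩ a b hab
    induction b using Fin.lastCases with
    | last =>
      induction a using Fin.lastCases with
      | last => simp
      | cast a => simpa using hk a
    | cast b =>
      induction a using Fin.lastCases with
      | last => exact absurd hab (not_le.2 (Fin.castSucc_lt_last b))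
      | cast a => simpa using h (Fin.castSucc_le_castSucc_iff.1 hab)

lemma cc10_snoc {n : ℕ} (B : ℕ → ℕ) (g : Fin n → ℕ) (k : ℕ) :
    cc10 B (Fin.snoc g k : Fin (n+1) → ℕ) = cc10 B g + if k = B n then 1 else 0 := by
  unfold cc10
  rw [Fin.sum_univ_castSucc]
  simp only [Fin.snoc_castSucc, Fin.snoc_last, Fin.val_castSucc, Fin.val_last]

lemma cc10_le {n : ℕ} (B : ℕ → ℕ) (h : Fin n → ℕ) : cc10 B h ≤ n := by
  unfold cc10
  refine (Finset.sum_le_sum (g := fun _ => 1) ?_).trans (by simp)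
  intro m _; split_ifs <;> simp

lemma all10 {n : ℕ} (q : Fin (n+1) → ℕ → Prop) (g : Fin n → ℕ) (k : ℕ) :
    (∀ m, q m ((Fin.snoc g k : Fin (n+1) → ℕ) m)) ↔ (∀ m, q m.castSucc (g m)) ∧ q (Fin.last n) k := by
  rw [Fin.forall_fin_succ']; simp

lemma G10_step (B : ℕ → ℕ) (n k : ℕ) (hB : B n ≤ k) :
    (G10 B (n+1) (k+1)).ncard = (G10 B (n+1) k).ncard + (G10 B n (k+1)).ncard := by
  have e : G10 B (n+1) (k+1) = G10 B (n+1) k ∪ {h | h ∈ G10 B (n+1) (k+1) ∧ h (Fin.last n) = k} := by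
    ext h
    constructor
    · intro hh
      by_cases hk : h (Fin.last n) = k
      · exact Or.inr ⟨hh, hk⟩
      · refine Or.inl ⟨hh.1, fun m => ⟨(hh.2 m).1, ?_⟩⟩
        have h1 := hh.1 (Fin.le_last m)
        have h2 := (hh.2 (Fin.last n)).2
        omega
    · rintro (hh | hh)
      · exact ⟨hh.1, fun m => ⟨(hh.2 m).1, by have := (hh.2 m).2; omega⟩⟩
      · exact hh.1
  rw [e, Set.ncard_union_eq ?_ (fin10 k _ (fun h hh m => (hh.2 m).2.le))
    (fin10 (k+1) _ (fun h hh m => (hh.1.2 m).2.le))]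
  · congr 1
    apply snoc10 k
    · intro h hh; exact hh.2
    · intro g
      simp only [G10, Set.mem_ofPred_eq, mono10, Fin.snoc_last, and_true]
      rw [all10 (fun m v => B m ≤ v ∧ v < k+1)]
      simp only [Fin.val_castSucc, Fin.val_last]
      constructor
      · rintro ⟨⟨a, b⟩, c, d⟩; exact ⟨a, c⟩
      · rintro ⟨a, c⟩
        exact ⟨⟨a, fun m => by have := (c m).2; omega⟩, c, by omega⟩
  · rw [Set.disjoint_left]
    rintro h hh ⟨_, h2⟩
    have := (hh.2 (Fin.last n)).2
    omega

lemma F10_top (B : ℕ → ℕ) (n k j : ℕ) (hB : B n ≤ k) :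
    {h | h ∈ F10 B (n+1) k (j + if k = B n then 1 else 0) ∧ h (Fin.last n) = k}.ncard
      = (F10 B n k j).ncard := by
  apply snoc10 k
  · intro h hh; exact hh.2
  · intro g
    simp only [F10, Set.mem_ofPred_eq, mono10, Fin.snoc_last, and_true, cc10_snoc]
    rw [all10 (fun m v => B m ≤ v ∧ v ≤ k)]
    simp only [Fin.val_castSucc, Fin.val_last]
    constructor
    · rintro ⟨⟨a, b⟩, ⟨c, d⟩, e⟩; exact ⟨a, c, by omega⟩
    · rintro ⟨a, c, e⟩
      exact ⟨⟨a, fun m => (c m).2⟩, ⟨c, by omega⟩, by omega⟩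

lemma F10_step (B : ℕ → ℕ) (n k j : ℕ) (hB : B n ≤ k) :
    (F10 B (n+1) (k+1) j).ncard = (F10 B (n+1) k j).ncard + (F10 B n (k+1) j).ncard := by
  have e : F10 B (n+1) (k+1) j =
      F10 B (n+1) k j ∪ {h | h ∈ F10 B (n+1) (k+1) j ∧ h (Fin.last n) = k+1} := by
    ext h
    constructor
    · intro hh
      by_cases hk : h (Fin.last n) = k+1
      · exact Or.inr ⟨hh, hk⟩
      · refine Or.inl ⟨hh.1, fun m => ⟨(hh.2.1 m).1, ?_⟩, hh.2.2⟩
        have h1 := hh.1 (Fin.le_last m)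
        have h2 := (hh.2.1 (Fin.last n)).2
        omega
    · rintro (hh | hh)
      · exact ⟨hh.1, fun m => ⟨(hh.2.1 m).1, by have := (hh.2.1 m).2; omega⟩, hh.2.2⟩
      · exact hh.1
  rw [e, Set.ncard_union_eq ?_ (fin10 k _ (fun h hh m => (hh.2.1 m).2))
    (fin10 (k+1) _ (fun h hh m => (hh.1.2.1 m).2))]
  · congr 1
    have := F10_top B n (k+1) j (by omega)
    rw [if_neg (by omega)] at this
    exact this
  · rw [Set.disjoint_left]
    rintro h hh ⟨_, h2⟩
    have := (hh.2.1 (Fin.last n)).2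
    omega

lemma G10_zero (B : ℕ → ℕ) (k : ℕ) : (G10 B 0 k).ncard = 1 := by
  have : G10 B 0 k = {Fin.elim0} := by
    ext h
    simp only [G10, Set.mem_ofPred_eq, Set.mem_singleton_iff]
    exact ⟨fun _ => Subsingleton.elim _ _, fun _ => ⟨fun a => a.elim0, fun a => a.elim0⟩⟩
  rw [this, Set.ncard_singleton]

lemma F10_eq (B : ℕ → ℕ) (hB : Monotone B) : ∀ s n k j : ℕ, n + k = s → j ≤ n →
    (∀ m < n, B m ≤ k) → (F10 B n k j).ncard = (G10 B (n-j) k).ncard := by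
  intro s
  induction s with
  | zero =>
    intro n k j hs hj hk
    obtain rfl : n = 0 := by omega
    obtain rfl : j = 0 := by omega
    congr 1
    ext h
    simp [F10, G10, cc10]
  | succ s ih =>
    intro n k j hs hj hk
    rcases n with _ | n
    · obtain rfl : j = 0 := by omega
      congr 1
      ext h
      simp [F10, G10, cc10]
    have hn := hk n (by omega)
    by_cases hbk : B n = k
    · have forced : ∀ h, h ∈ F10 B (n+1) k j → h (Fin.last n) = k := by
        intro h hh
        have := hh.2.1 (Fin.last n)
        simp only [Fin.val_last] at this
        omega
      rcases j with _ | j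
      · have h1 : F10 B (n+1) k 0 = ∅ := by
          ext h
          simp only [Set.mem_empty_iff_false, iff_false]
          intro hh
          have h2 := forced h hh
          have h3 := hh.2.2
          unfold cc10 at h3
          rw [Fin.sum_univ_castSucc, h2, Fin.val_last, if_pos hbk.symm] at h3
          omega
        have h2 : G10 B (n+1) k = ∅ := by
          ext h
          simp only [Set.mem_empty_iff_false, iff_false]
          intro hh
          have := hh.2 (Fin.last n)
          simp only [Fin.val_last] at this
          omega
        simp [h1, h2]
      · have := F10_top B n k j hn
        rw [if_pos hbk.symm] at this
        have e : {h | h ∈ F10 B (n+1) k (j+1) ∧ h (Fin.last n) = k} = F10 B (n+1) k (j+1) := by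
          ext h; exact ⟨fun a => a.1, fun a => ⟨a, forced h a⟩⟩
        rw [e] at this
        rw [this, ih n k j (by omega) (by omega) (fun m hm => hk m (by omega))]
        rw [Nat.add_sub_add_right]
    · obtain ⟨k, rfl⟩ : ∃ k', k = k' + 1 := ⟨k-1, by omega⟩
      have hall : ∀ m < n+1, B m ≤ k := fun m hm => by
        have := hB (show m ≤ n by omega); omega
      rw [F10_step B n k j (by omega), ih (n+1) k j (by omega) hj hall]
      rcases Nat.lt_or_ge n j with hlt | hge
      · obtain rfl : j = n+1 := by omega
        have : F10 B n (k+1) (n+1) = ∅ := by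
          ext h
          simp only [Set.mem_empty_iff_false, iff_false]
          intro hh
          have := cc10_le B h
          have := hh.2.2
          omega
        rw [this]
        rw [Nat.sub_self, G10_zero, G10_zero, Set.ncard_empty]
      · rw [ih n (k+1) j (by omega) hge (fun m hm => hk m (by omega))]
        obtain ⟨d, rfl⟩ : ∃ d, n = j + d := ⟨n - j, by omega⟩
        have e1 : j + d + 1 - j = d + 1 := by omega
        have e2 : j + d - j = d := by omega
        rw [e1, e2]
        exact (G10_step B d k (hall d (by omega))).symm

lemma A10_eq (B : ℕ → ℕ) (hB : Monotone B) (y j : ℕ) : ∀ n i : ℕ, i + j ≤ n →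
    (∀ m < n, B m < y + 1) →
    (A10 B (y+1) n i j).ncard = (G10 B (n-i-j) y).ncard := by
  intro n i
  induction i generalizing n with
  | zero =>
    intro hij hb
    rw [Nat.sub_zero, ← F10_eq B hB _ n y j rfl (by omega) (fun m hm => by have := hb m hm; omega)]
    congr 1
    ext h
    simp only [A10, F10, Set.mem_ofPred_eq, cc10, Finset.sum_eq_zero_iff, Finset.mem_univ, true_imp_iff]
    constructor
    · rintro ⟨a, b, c, d⟩
      refine ⟨a, fun m => ⟨(b m).1, ?_⟩, d⟩
      have h1 := c m
      have h2 := (b m).2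
      split_ifs at h1
      omega
    · rintro ⟨a, b, d⟩
      refine ⟨a, fun m => ⟨(b m).1, by have := (b m).2; omega⟩, fun m => ?_, d⟩
      rw [if_neg]
      have := (b m).2; omega
  | succ i ih =>
    intro hij hb
    obtain ⟨n, rfl⟩ : ∃ n', n = n' + 1 := ⟨n-1, by omega⟩
    have hbn := hb n (by omega)
    have e : n + 1 - (i+1) - j = n - i - j := by omega
    rw [e, ← ih n (by omega) (fun m hm => hb m (by omega))]
    apply snoc10 (y+1)
    · intro h hh
      by_contra hne
      have h0 : cc10 (fun _ => y+1) h = 0 := by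
        simp only [cc10, Finset.sum_eq_zero_iff, Finset.mem_univ, true_imp_iff]
        intro m
        rw [if_neg]
        have h1 := hh.1 (Fin.le_last m)
        have h2 := (hh.2.1 (Fin.last n)).2
        omega
      have := hh.2.2.1
      omega
    · intro g
      simp only [A10, Set.mem_ofPred_eq, mono10, cc10_snoc]
      rw [all10 (fun m v => B m ≤ v ∧ v ≤ y+1), if_neg (show ¬ (y + 1 = B n) by omega)]
      simp only [Fin.val_castSucc, Fin.val_last, if_true, add_zero, add_left_inj]
      constructor
      · rintro ⟨⟨a, b⟩, ⟨c, d⟩, e⟩; exact ⟨a, c, e⟩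
      · rintro ⟨a, c, e⟩
        exact ⟨⟨a, fun m => (c m).2⟩, ⟨c, by omega⟩, e⟩

lemma bridge10 {n N : ℕ} (p : (Fin n → Fin N) → Prop) (S : Set (Fin n → ℕ))
    (hS : ∀ h ∈ S, ∀ m, h m < N) (hp : ∀ P, p P ↔ (fun m => (P m : ℕ)) ∈ S) :
    Nat.card {P // p P} = S.ncard := by
  rw [← Nat.card_coe_set_eq]
  refine Nat.card_congr ⟨fun P => ⟨fun m => (P.1 m : ℕ), (hp _).1 P.2⟩,
    fun h => ⟨fun m => ⟨h.1 m, hS _ h.2 m⟩, (hp _).2 h.2⟩, ?_, ?_⟩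
  · intro P; rfl
  · intro h; rfl

lemma ccount10 {x y : ℕ} (Q P : Fin x → Fin (y+1)) (B : ℕ → ℕ) (hQ : ∀ m : Fin x, B m = Q m) :
    ccount Q P = cc10 B (fun m => (P m : ℕ)) := by
  classical
  simp only [ccount, cc10, hQ, Nat.card_eq_fintype_card, Fintype.card_subtype, Finset.card_filter,
    Fin.ext_iff]

theorem stmt10 {x y : ℕ} (hy : 2 ≤ y) (T B : Fin x → Fin (y+1))
    (hT : ∀ j, (T j : ℕ) = y) (hB : Monotone B)
    (hlast : ∀ j : Fin x, (j : ℕ) = x - 1 → (B j : ℕ) < y)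
    (i j : ℕ) (hij : i + j ≤ x) :
    Nat.card {P : Fin x → Fin (y+1) // InP T B P ∧ ccount T P = i ∧ ccount B P = j}
    = Nat.card {h : Fin (x-i-j) → Fin (y-1) // Monotone h ∧
        ∀ m : Fin (x-i-j), (B ⟨(m : ℕ), by have := m.isLt; omega⟩ : ℕ) ≤ (h m : ℕ)} := by
  obtain ⟨y, rfl⟩ : ∃ y', y = y' + 1 := ⟨y-1, by omega⟩
  let C : ℕ → ℕ := fun m => if h : m < x then (B ⟨m, h⟩ : ℕ) else y + 1
  have hC : ∀ m (h : m < x), C m = B ⟨m, h⟩ := fun m h => dif_pos h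
  have hCm : Monotone C := by
    intro a b hab
    by_cases hb : b < x
    · rw [hC a (by omega), hC b hb]
      exact hB (show (⟨a, by omega⟩ : Fin x) ≤ ⟨b, hb⟩ from hab)
    · have hb' : C b = y + 1 := dif_neg hb
      by_cases ha : a < x
      · rw [hC a ha, hb']
        have := (B ⟨a, ha⟩).isLt; omega
      · have ha' : C a = y + 1 := dif_neg ha
        omega
  have hCy : ∀ m < x, C m < y + 1 := by
    intro m hm
    have h1 := hCm (show m ≤ x - 1 by omega)
    rw [hC (x-1) (by omega)] at h1
    have := hlast ⟨x-1, by omega⟩ rfl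
    omega
  rw [bridge10 _ (A10 C (y+1) x i j), bridge10 _ (G10 C (x-i-j) y)]
  · exact A10_eq C hCm y j x i hij hCy
  · intro h hh m
    exact (hh.2 m).2
  · intro P
    refine and_congr Iff.rfl (forall_congr' fun m => ?_)
    have := (P m).isLt
    rw [hC m (by have := m.isLt; omega)]
    exact ⟨fun a => ⟨a, this⟩, fun a => a.1⟩
  · intro h hh m
    have := (hh.2.1 m).2
    omega
  · intro P
    rw [ccount10 T P (fun _ => y+1) (fun m => (hT m).symm), ccount10 B P C (fun m => hC m m.isLt)]
    simp only [InP, A10, Set.mem_ofPred_eq, and_assoc]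
    refine and_congr Iff.rfl (and_congr (forall_congr' fun m => ?_) Iff.rfl)
    rw [hC m m.isLt, Fin.le_def, Fin.le_def, hT]
end

section
/- Let n ≥ 1 and D ⊆ {1,…,n−1}. For all natural numbers e and f, the number of permutations π of {1,…,n} whose set of occurrence positions of the pattern 13-2 equals D and which have exactly e right-to-left minima and exactly f right-to-left maxima equals the number of permutations π of {1,…,n} whose set of occurrence positions of the pattern 13-2 equals D and which have exactly f right-to-left minima and exactly e right-to-left maxima. (On permutations with prescribed occurrence positions of 13-2, the joint distribution of the number of right-to-left minima and the number of right-to-left maxima is symmetric.) -/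
/-- The number of right-to-left minima of a permutation `π` of `{1,…,n}`
(identified with `Fin n`). -/
noncomputable def rlMinCount (n : ℕ) (π : Equiv.Perm (Fin n)) : ℕ :=
  Nat.card {i : Fin n // ∀ j : Fin n, i < j → π i < π j}

/-- The number of right-to-left maxima of a permutation `π` of `{1,…,n}`. -/
noncomputable def rlMaxCount (n : ℕ) (π : Equiv.Perm (Fin n)) : ℕ :=
  Nat.card {i : Fin n // ∀ j : Fin n, i < j → π j < π i}

/-- The set of positions `i ∈ {1,…,n-1}` (encoded by `i-1 : Fin (n-1)`) where
`π` has an occurrence of the dashed pattern 13-2, i.e. there is `j > i+1` with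
`π(i) < π(j) < π(i+1)`. -/
def occSet (n : ℕ) (π : Equiv.Perm (Fin n)) : Set (Fin (n-1)) :=
  {i | ∃ j : Fin n, (i : ℕ) + 1 < (j : ℕ) ∧
    π ⟨(i : ℕ), by have := i.isLt; omega⟩ < π j ∧
    π j < π ⟨(i : ℕ) + 1, by have := i.isLt; omega⟩}


section helpers
open Finset

def wB {R : Type} [CommRing R] (x y : R) (m b : ℕ) : R :=
  (if b = 0 then x else 1) * (if b = m then y else 1)

def PB {R : Type} [CommRing R] (x y : R) : ℕ → ℕ → ℕ → R
  | 0, _, _ => 1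
  | k + 1, m, a => ∑ b ∈ Finset.Ico a (m + 1), wB x y m b * PB x y k (m + 1) b

theorem PB_indep {R : Type} [CommRing R] (x x' y : R) (k : ℕ) : ∀ (m a : ℕ), 1 ≤ a →
    PB x y k m a = PB x' y k m a := by
  induction k with
  | zero => intros; rfl
  | succ k ih =>
    intro m a ha
    simp only [PB]
    apply Finset.sum_congr rfl
    intro b hb
    have hb1 := (Finset.mem_Ico.1 hb).1
    have hb0 : b ≠ 0 := by omega
    rw [ih (m + 1) b (by omega)]
    simp [wB, hb0]

theorem PB_top {R : Type} [CommRing R] (x y : R) (k m a : ℕ) (ha : 1 ≤ a) (ham : a ≤ m) :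
    PB x y (k + 1) m a = ∑ b ∈ Finset.Ico a m, PB x y k (m + 1) b + y * PB x y k (m + 1) m := by
  simp only [PB]
  rw [Finset.sum_Ico_succ_top ham]
  congr 1
  · apply Finset.sum_congr rfl
    intro b hb
    have hb1 := Finset.mem_Ico.1 hb
    have hb0 : b ≠ 0 := by omega
    have hbm : b ≠ m := by omega
    simp [wB, hb0, hbm]
  · have : m ≠ 0 := by omega
    simp [wB, this]

theorem PB_star {R : Type} [CommRing R] (x y : R) (k : ℕ) : ∀ (m a : ℕ), 1 ≤ a → a ≤ m →
    PB x y (k + 1) m a = PB x 0 (k + 1) m a + y * PB x y k (m + 1) a := by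
  induction k with
  | zero =>
    intro m a ha ham
    rw [PB_top x y 0 m a ha ham, PB_top x 0 0 m a ha ham]
    simp [PB]
  | succ k ih =>
    intro m a ha ham
    rw [PB_top x y (k + 1) m a ha ham, PB_top x 0 (k + 1) m a ha ham,
      PB_top x y k (m + 1) a ha (by omega), Finset.sum_Ico_succ_top ham,
      PB_top x y k (m + 1) m (by omega) (by omega)]
    have : ∑ b ∈ Finset.Ico a m, PB x y (k + 1) (m + 1) b
        = ∑ b ∈ Finset.Ico a m, (PB x 0 (k + 1) (m + 1) b + y * PB x y k (m + 1 + 1) b) := by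
      apply Finset.sum_congr rfl
      intro b hb
      have hb1 := Finset.mem_Ico.1 hb
      exact ih (m + 1) b (by omega) (by omega)
    rw [this, Finset.sum_add_distrib, ← Finset.mul_sum]
    have h2 : Finset.Ico m (m + 1) = {m} := by ext; simp
    rw [h2, Finset.sum_singleton]
    ring

theorem PB_bot {R : Type} [CommRing R] (x y : R) (k m : ℕ) (hm : 1 ≤ m) :
    PB x y (k + 1) m 0 = x * PB x y k (m + 1) 0 + PB x y (k + 1) m 1 := by
  simp only [PB]
  rw [Finset.sum_eq_sum_Ico_succ_bot (by omega)]
  have : ¬ (0 = m) := by omega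
  simp [wB, this]

theorem PB_diff {R : Type} [CommRing R] (x y : R) (k : ℕ) : ∀ (m : ℕ), 1 ≤ m →
    (x - y) * PB x y k m 0 = x * PB x x k m 1 - y * PB x y k m 1 := by
  induction k with
  | zero => intros; simp [PB]
  | succ k ih =>
    intro m hm
    have h1 := PB_bot x y k m hm
    have h2 := ih (m + 1) (by omega)
    have h3 := PB_star x y k m 1 le_rfl hm
    have h4 := PB_star x x k m 1 le_rfl hm
    rw [h1]
    linear_combination x * h2 + x * h3 - x * h4

theorem PB_symm {R : Type} [CommRing R] (x y : R) (k : ℕ) : ∀ (m : ℕ), 1 ≤ m →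
    PB x y k m 0 = PB y x k m 0 := by
  induction k with
  | zero => intros; simp [PB]
  | succ k ih =>
    intro m hm
    rw [PB_bot x y k m hm, PB_bot y x k m hm, ← ih (m + 1) (by omega), PB_indep y x x (k + 1) m 1 le_rfl]
    have h2 := PB_diff x y k (m + 1) (by omega)
    have h3 := PB_star x y k m 1 le_rfl hm
    have h4 := PB_star x x k m 1 le_rfl hm
    have h5 : PB x y k (m+1) 1 = PB x y k (m+1) 1 := rfl
    linear_combination h2 + h3 - h4

def consP {n : ℕ} (b : Fin (n + 1)) (σ : Equiv.Perm (Fin n)) : Equiv.Perm (Fin (n + 1)) :=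
  ((finSuccEquiv' 0).trans (Equiv.optionCongr σ)).trans (finSuccEquiv' b).symm

theorem consP_zero {n : ℕ} (b : Fin (n + 1)) (σ : Equiv.Perm (Fin n)) : consP b σ 0 = b := by
  simp [consP]

theorem consP_succ {n : ℕ} (b : Fin (n + 1)) (σ : Equiv.Perm (Fin n)) (i : Fin n) :
    consP b σ i.succ = b.succAbove (σ i) := by
  have : finSuccEquiv' (0 : Fin (n + 1)) i.succ = some i := by
    simpa using finSuccEquiv'_succAbove (0 : Fin (n + 1)) i
  simp [consP, this]

theorem consP_bij (n : ℕ) : Function.Bijective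
    (fun p : Fin (n + 1) × Equiv.Perm (Fin n) => consP p.1 p.2) := by
  rw [Fintype.bijective_iff_injective_and_card]
  constructor
  · rintro ⟨b, σ⟩ ⟨b', σ'⟩ h
    simp only at h
    have h0 : b = b' := by rw [← consP_zero b σ, h, consP_zero]
    subst h0
    have : σ = σ' := by
      ext i
      have := consP_succ b σ i
      rw [h, consP_succ] at this
      rw [Fin.succAbove_right_injective this]
    rw [this]
  · simp [Fintype.card_perm, Nat.factorial_succ]

theorem rlMin_cons {n : ℕ} (b : Fin (n + 1)) (σ : Equiv.Perm (Fin n)) :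
    rlMinCount (n + 1) (consP b σ) = (if (b : ℕ) = 0 then 1 else 0) + rlMinCount n σ := by
  classical
  unfold rlMinCount
  rw [Nat.card_eq_fintype_card, Nat.card_eq_fintype_card, Fintype.card_subtype,
    Fintype.card_subtype, Fin.card_filter_univ_succ]
  have h1 : (∀ j : Fin (n + 1), 0 < j → consP b σ 0 < consP b σ j) ↔ (b : ℕ) = 0 := by
    constructor
    · intro h
      by_contra hb
      have hb' : (0 : Fin (n + 1)) ≠ b := fun hh => hb (by rw [← hh]; rfl)
      obtain ⟨c, hc⟩ := Fin.exists_succAbove_eq hb'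
      have := h (σ.symm c).succ (Fin.succ_pos _)
      rw [consP_zero, consP_succ, Equiv.apply_symm_apply, hc] at this
      exact absurd this (Fin.not_lt_zero _)
    · intro hb j hj
      obtain ⟨i, rfl⟩ := Fin.exists_succ_eq.2 hj.ne'
      rw [consP_zero, consP_succ, Fin.lt_def, hb]
      have := Fin.succAbove_ne b (σ i)
      rw [Ne, Fin.ext_iff] at this
      omega
  have h2 : ∀ i : Fin n, (∀ j : Fin (n + 1), i.succ < j → consP b σ i.succ < consP b σ j) ↔
      ∀ j : Fin n, i < j → σ i < σ j := by
    intro i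
    rw [Fin.forall_fin_succ]
    simp [consP_succ, Fin.succAbove_lt_succAbove_iff]
  simp only [Function.comp_def, h1, h2]
  split_ifs <;> omega

theorem rlMax_cons {n : ℕ} (b : Fin (n + 1)) (σ : Equiv.Perm (Fin n)) :
    rlMaxCount (n + 1) (consP b σ) = (if (b : ℕ) = n then 1 else 0) + rlMaxCount n σ := by
  classical
  unfold rlMaxCount
  rw [Nat.card_eq_fintype_card, Nat.card_eq_fintype_card, Fintype.card_subtype,
    Fintype.card_subtype, Fin.card_filter_univ_succ]
  have h1 : (∀ j : Fin (n + 1), 0 < j → consP b σ j < consP b σ 0) ↔ (b : ℕ) = n := by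
    constructor
    · intro h
      by_contra hb
      have hb' : Fin.last n ≠ b := fun hh => hb (by rw [← hh]; rfl)
      obtain ⟨c, hc⟩ := Fin.exists_succAbove_eq hb'
      have := h (σ.symm c).succ (Fin.succ_pos _)
      rw [consP_zero, consP_succ, Equiv.apply_symm_apply, hc] at this
      exact absurd this (not_lt.2 (Fin.le_last _))
    · intro hb j hj
      obtain ⟨i, rfl⟩ := Fin.exists_succ_eq.2 hj.ne'
      rw [consP_zero, consP_succ, Fin.lt_def, hb]
      have := Fin.succAbove_ne b (σ i)
      rw [Ne, Fin.ext_iff] at this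
      omega
  have h2 : ∀ i : Fin n, (∀ j : Fin (n + 1), i.succ < j → consP b σ j < consP b σ i.succ) ↔
      ∀ j : Fin n, i < j → σ j < σ i := by
    intro i
    rw [Fin.forall_fin_succ]
    simp [consP_succ, Fin.succAbove_lt_succAbove_iff]
  simp only [Function.comp_def, h1, h2]
  split_ifs <;> omega

def OccAt (n : ℕ) (π : Equiv.Perm (Fin n)) (i : ℕ) : Prop :=
  ∃ (h : i + 1 < n) (j : Fin n), i + 1 < (j : ℕ) ∧
    π ⟨i, by omega⟩ < π j ∧ π j < π ⟨i + 1, h⟩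

def GoodD (n : ℕ) (D : ℕ → Prop) (π : Equiv.Perm (Fin n)) : Prop :=
  ∀ i, i + 1 < n → (D i ↔ OccAt n π i)

theorem occ_succ {n : ℕ} (b : Fin (n + 1)) (σ : Equiv.Perm (Fin n)) (i : ℕ) :
    OccAt (n + 1) (consP b σ) (i + 1) ↔ OccAt n σ i := by
  unfold OccAt
  constructor
  · rintro ⟨h, j, hj, h1, h2⟩
    have hj0 : j ≠ 0 := by rintro rfl; simp at hj
    obtain ⟨j, rfl⟩ := Fin.exists_succ_eq.2 hj0
    refine ⟨by omega, j, by simpa using hj, ?_, ?_⟩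
    · have e : (⟨i + 1, by omega⟩ : Fin (n + 1)) = Fin.succ ⟨i, by omega⟩ := rfl
      rw [e, consP_succ, consP_succ, Fin.succAbove_lt_succAbove_iff] at h1
      exact h1
    · have e : (⟨i + 1 + 1, h⟩ : Fin (n + 1)) = Fin.succ ⟨i + 1, by omega⟩ := rfl
      rw [e, consP_succ, consP_succ, Fin.succAbove_lt_succAbove_iff] at h2
      exact h2
  · rintro ⟨h, j, hj, h1, h2⟩
    refine ⟨by omega, j.succ, by simpa using hj, ?_, ?_⟩
    · have e : (⟨i + 1, by omega⟩ : Fin (n + 1)) = Fin.succ ⟨i, by omega⟩ := rfl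
      rw [e, consP_succ, consP_succ, Fin.succAbove_lt_succAbove_iff]
      exact h1
    · have e : (⟨i + 1 + 1, by omega⟩ : Fin (n + 1)) = Fin.succ ⟨i + 1, by omega⟩ := rfl
      rw [e, consP_succ, consP_succ, Fin.succAbove_lt_succAbove_iff]
      exact h2

theorem occ_zero {m : ℕ} (b : Fin (m + 2)) (σ : Equiv.Perm (Fin (m + 1))) :
    OccAt (m + 2) (consP b σ) 0 ↔ (b : ℕ) < (σ 0 : ℕ) := by
  have hk : OccAt (m + 2) (consP b σ) 0 ↔ ∃ (_ : 0 + 1 < m + 2) (j : Fin (m + 2)),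
      0 + 1 < (j : ℕ) ∧ consP b σ 0 < consP b σ j ∧
        consP b σ j < consP b σ (Fin.succ 0) := Iff.rfl
  rw [hk, consP_zero, consP_succ]
  constructor
  · rintro ⟨_, j, hj, h1, h2⟩
    have hj0 : j ≠ 0 := by rintro rfl; simp at hj
    obtain ⟨j, rfl⟩ := Fin.exists_succ_eq.2 hj0
    rw [consP_succ] at h1 h2
    rw [Fin.succAbove_lt_succAbove_iff] at h2
    rw [Fin.lt_succAbove_iff_le_castSucc] at h1
    rw [Fin.le_def] at h1
    rw [Fin.lt_def] at h2
    simp at h1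
    omega
  · intro h
    have hs := (σ 0).isLt
    let c : Fin (m + 1) := ⟨b, by omega⟩
    refine ⟨by omega, (σ.symm c).succ, ?_, ?_, ?_⟩
    · have : σ.symm c ≠ 0 := by
        intro hh
        rw [Equiv.symm_apply_eq] at hh
        rw [← hh] at h
        simp [c] at h
      have : (σ.symm c : ℕ) ≠ 0 := fun hh => this (Fin.ext hh)
      simp only [Fin.val_succ]
      omega
    · rw [consP_succ, Equiv.apply_symm_apply, Fin.lt_succAbove_iff_le_castSucc, Fin.le_def]
      simp [c]
    · rw [consP_succ, Equiv.apply_symm_apply, Fin.succAbove_lt_succAbove_iff, Fin.lt_def]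
      exact h

theorem good_cons {m : ℕ} (D : ℕ → Prop) (b : Fin (m + 2)) (σ : Equiv.Perm (Fin (m + 1))) :
    GoodD (m + 2) D (consP b σ) ↔
      (D 0 ↔ (b : ℕ) < (σ 0 : ℕ)) ∧ GoodD (m + 1) (fun i => D (i + 1)) σ := by
  unfold GoodD
  constructor
  · intro h
    refine ⟨by rw [h 0 (by omega), occ_zero], fun i hi => ?_⟩
    exact (h (i + 1) (by omega)).trans (occ_succ b σ i)
  · rintro ⟨h0, h⟩ i hi
    cases i with
    | zero => rw [h0, occ_zero]
    | succ i => exact (h i (by omega)).trans (occ_succ b σ i).symm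

open Classical in
noncomputable def SB {R : Type} [CommRing R] (x y : R) (m : ℕ) (D : ℕ → Prop) (k : ℕ) : R :=
  ∑ π : Equiv.Perm (Fin (m + 1)), if GoodD (m + 1) D π then
    x ^ rlMinCount (m + 1) π * y ^ rlMaxCount (m + 1) π * PB x y k (m + 1) (π 0 : ℕ) else 0

theorem wB_cons {R : Type} [CommRing R] (x y : R) {n : ℕ} (b : Fin (n + 1))
    (σ : Equiv.Perm (Fin n)) :
    x ^ rlMinCount (n + 1) (consP b σ) * y ^ rlMaxCount (n + 1) (consP b σ)
      = x ^ rlMinCount n σ * y ^ rlMaxCount n σ * wB x y n b := by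
  rw [rlMin_cons, rlMax_cons, wB]
  split_ifs <;> ring

theorem sum_fin_ge {R : Type} [CommRing R] (x y : R) (k n a : ℕ) :
    ∑ b : Fin (n + 1), (if a ≤ (b : ℕ) then wB x y n b * PB x y k (n + 1) b else 0)
      = PB x y (k + 1) n a := by
  rw [Fin.sum_univ_eq_sum_range (fun b => if a ≤ b then wB x y n b * PB x y k (n + 1) b else 0),
    ← Finset.sum_filter, PB]
  apply Finset.sum_congr _ (fun _ _ => rfl)
  ext; simp; omega

theorem sum_fin_lt {R : Type} [CommRing R] (x y : R) (k n a : ℕ) :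
    ∑ b : Fin (n + 1), (if (b : ℕ) < a then wB x y n b * PB x y k (n + 1) b else 0)
      = PB x y (k + 1) n 0 - PB x y (k + 1) n a := by
  rw [← sum_fin_ge x y k n a, ← sum_fin_ge x y k n 0, ← Finset.sum_sub_distrib]
  apply Finset.sum_congr rfl
  intro b _
  by_cases h : (b : ℕ) < a
  · simp [h, not_le.2 h]
  · simp [h, not_lt.1 h]

open Classical in
theorem SB_succ {R : Type} [CommRing R] (x y : R) (m : ℕ) (D : ℕ → Prop) (k : ℕ) :
    SB x y (m + 1) D k = if D 0 then
      PB x y (k + 1) (m + 1) 0 * SB x y m (fun i => D (i + 1)) 0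
        - SB x y m (fun i => D (i + 1)) (k + 1)
      else SB x y m (fun i => D (i + 1)) (k + 1) := by
  have key : SB x y (m + 1) D k = ∑ σ : Equiv.Perm (Fin (m + 1)),
      if GoodD (m + 1) (fun i => D (i + 1)) σ then
        x ^ rlMinCount (m + 1) σ * y ^ rlMaxCount (m + 1) σ *
        ∑ b : Fin (m + 2), (if (D 0 ↔ (b : ℕ) < (σ 0 : ℕ)) then
          wB x y (m + 1) b * PB x y k (m + 2) b else 0) else 0 := by
    unfold SB
    rw [← (consP_bij (m + 1)).sum_comp, Fintype.sum_prod_type_right]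
    apply Finset.sum_congr rfl
    intro σ _
    by_cases hg : GoodD (m + 1) (fun i => D (i + 1)) σ
    · rw [if_pos hg, Finset.mul_sum]
      apply Finset.sum_congr rfl
      intro b _
      simp only [good_cons, hg, and_true, wB_cons, consP_zero]
      split_ifs <;> ring
    · simp [good_cons, hg]
  rw [key]
  by_cases hD : D 0
  · simp only [hD, true_iff, if_true, sum_fin_lt]
    unfold SB
    rw [Finset.mul_sum, ← Finset.sum_sub_distrib]
    apply Finset.sum_congr rfl
    intro σ _
    split_ifs
    · simp only [PB]; ring
    · ring
  · simp only [hD, false_iff, if_false, not_lt, sum_fin_ge]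
    rfl

theorem SB_symm {R : Type} [CommRing R] (x y : R) (m : ℕ) : ∀ (D : ℕ → Prop) (k : ℕ),
    SB x y m D k = SB y x m D k := by
  induction m with
  | zero =>
    intro D k
    unfold SB
    apply Finset.sum_congr rfl
    intro π _
    have h1 : rlMinCount 1 π = 1 := by
      unfold rlMinCount
      rw [Nat.card_eq_fintype_card, Fintype.card_subtype]
      simp [Subsingleton.elim _ (0 : Fin 1)]
    have h2 : rlMaxCount 1 π = 1 := by
      unfold rlMaxCount
      rw [Nat.card_eq_fintype_card, Fintype.card_subtype]
      simp [Subsingleton.elim _ (0 : Fin 1)]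
    have h3 : ((π 0 : Fin 1) : ℕ) = 0 := by omega
    simp only [zero_add, h1, h2, h3, PB_symm x y k 1 le_rfl, mul_comm (x ^ 1)]
  | succ m ih =>
    intro D k
    rw [SB_succ, SB_succ, ih _ 0, ih _ (k + 1), PB_symm x y (k + 1) (m + 1) (by omega)]

theorem good_iff (m : ℕ) (D : Set (Fin (m + 1 - 1))) (π : Equiv.Perm (Fin (m + 1))) :
    occSet (m + 1) π = D ↔ GoodD (m + 1) (fun i => ∃ h : i < m + 1 - 1, ⟨i, h⟩ ∈ D) π := by
  have hh : ∀ (i : ℕ) (h : i < m + 1 - 1), (⟨i, h⟩ ∈ occSet (m + 1) π ↔ OccAt (m + 1) π i) := by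
    intro i h
    unfold OccAt occSet
    constructor
    · rintro ⟨j, hj⟩
      exact ⟨by omega, j, hj⟩
    · rintro ⟨_, j, hj⟩
      exact ⟨j, hj⟩
  constructor
  · rintro rfl i hi
    rw [← hh i (by omega)]
    exact ⟨fun ⟨_, h⟩ => h, fun h => ⟨_, h⟩⟩
  · intro h
    ext ⟨i, hi⟩
    rw [hh, ← h i (by omega)]
    exact ⟨fun ⟨_, h⟩ => h, fun h => ⟨_, h⟩⟩

open Classical in
theorem coeff_count (m : ℕ) (D : ℕ → Prop) (u v : Equiv.Perm (Fin (m + 1)) → ℕ) (e f : ℕ) :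
    ((∑ π : Equiv.Perm (Fin (m + 1)), if GoodD (m + 1) D π then
      (Polynomial.C Polynomial.X : Polynomial (Polynomial ℤ)) ^ u π * Polynomial.X ^ v π
        else 0).coeff f).coeff e
      = (Nat.card {π : Equiv.Perm (Fin (m + 1)) // GoodD (m + 1) D π ∧ u π = e ∧ v π = f} : ℤ) := by
  rw [Nat.card_eq_fintype_card, Fintype.card_subtype, Finset.card_filter]
  simp only [Polynomial.finsetSum_coeff]
  push_cast
  apply Finset.sum_congr rfl
  intro π _
  by_cases hg : GoodD (m + 1) D π
  · simp only [hg, if_true, true_and]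
    rw [← Polynomial.C_pow, Polynomial.coeff_C_mul, Polynomial.coeff_X_pow]
    by_cases h1 : v π = f
    · simp [h1, Polynomial.coeff_X_pow, eq_comm]
    · simp [h1, Ne.symm h1]
  · simp [hg]

end helpers

/-- On permutations with prescribed occurrence positions of 13-2, the joint
distribution of the number of right-to-left minima and right-to-left maxima is
symmetric. -/
theorem stmt13 (n : ℕ) (hn : 1 ≤ n) (D : Set (Fin (n-1))) (e f : ℕ) :
    Nat.card {π : Equiv.Perm (Fin n) //
        occSet n π = D ∧ rlMinCount n π = e ∧ rlMaxCount n π = f}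
    = Nat.card {π : Equiv.Perm (Fin n) //
        occSet n π = D ∧ rlMinCount n π = f ∧ rlMaxCount n π = e} := by
  obtain ⟨m, rfl⟩ : ∃ m, n = m + 1 := ⟨n - 1, by omega⟩
  simp only [good_iff]
  have h := SB_symm (Polynomial.C Polynomial.X : Polynomial (Polynomial ℤ)) Polynomial.X m
    (fun i => ∃ h : i < m + 1 - 1, ⟨i, h⟩ ∈ D) 0
  simp only [SB, PB, mul_one] at h
  have h' := congrArg (fun p => (p.coeff f).coeff e) h
  simp only [mul_comm (Polynomial.X ^ rlMinCount _ _ : Polynomial (Polynomial ℤ))] at h'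
  rw [coeff_count, coeff_count] at h'
  rw [Nat.cast_inj.1 h']
  simp only [and_comm]
end
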